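/- arXiv:1307.1415 — 10 statements merged into one kernel-verified Lean document; each statement's English description precedes it below -/
import Mathlib

section
/- Let X and Y be nonzero pre-ordered Banach spaces with closed cones. Then the cone B(X,Y)₊ is proper if and only if X equals the norm closure of X₊ − X₊ and Y₊ is proper. -/
open scoped Pointwise

/-!
The positive operators `T` with `-T` positive are those mapping `Cx` into the lineality set
`Cy ∩ -Cy`, which is stable under real scalars. Such a set `L` receives no nonzero operator from
`Cx` exactly when `L = {0}` and the span `Cx - Cx` is dense: otherwise some rank-one operator
`x ↦ f x • y` is a counterexample, with `y ∈ L` nonzero and `f ≠ 0` arbitrary in the first case, and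
with `y ≠ 0` arbitrary and `f ≠ 0` vanishing on `Cx`, given by Hahn-Banach, in the second.
-/

section Cone

variable {R M : Type*} [Ring R] [LinearOrder R] [IsOrderedAddMonoid R]
  [AddCommGroup M] [Module R M]

theorem coe_span_convexCone_eq_sub (C : ConvexCone R M) (hC : (C : Set M).Nonempty) :
    (Submodule.span R (C : Set M) : Set M) = (C : Set M) - (C : Set M) := by
  obtain ⟨c, hc⟩ := hC
  refine Set.Subset.antisymm (fun x hx ↦ ?_) ?_
  · induction hx using Submodule.span_induction with
    | mem x hx => exact ⟨x + c, C.add_mem hx hc, c, hc, add_sub_cancel_right x c⟩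
    | zero => exact ⟨c, hc, c, hc, sub_self c⟩
    | add _ _ _ _ hx hy =>
      obtain ⟨a, ha, b, hb, rfl⟩ := hx
      obtain ⟨a', ha', b', hb', rfl⟩ := hy
      exact ⟨a + a', C.add_mem ha ha', b + b', C.add_mem hb hb', add_sub_add_comm ..⟩
    | smul r _ _ hx =>
      obtain ⟨a, ha, b, hb, rfl⟩ := hx
      rcases lt_trichotomy r 0 with hr | rfl | hr
      · have hr' : 0 < -r := neg_pos.mpr hr
        exact ⟨-r • b, C.smul_mem hr' hb, -r • a, C.smul_mem hr' ha, by
          simp only [neg_smul, smul_sub, neg_sub_neg]⟩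
      · exact ⟨c, hc, c, hc, by simp only [sub_self, zero_smul]⟩
      · exact ⟨r • a, C.smul_mem hr ha, r • b, C.smul_mem hr hb, (smul_sub r a b).symm⟩
  · rintro _ ⟨a, ha, b, hb, rfl⟩
    exact sub_mem (Submodule.subset_span ha) (Submodule.subset_span hb)

theorem dense_sub_iff_dense_span [TopologicalSpace M] [T1Space M] [Nontrivial M]
    (C : ConvexCone R M) :
    Dense ((C : Set M) - (C : Set M)) ↔ Dense (Submodule.span R (C : Set M) : Set M) := by
  rcases (C : Set M).eq_empty_or_nonempty with hC | hC
  · have not_dense_zero : ¬ Dense ({0} : Set M) := fun h ↦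
      (Set.nontrivial_univ (α := M)).ne_singleton (h.closure_eq ▸ closure_singleton)
    simp [hC, not_dense_zero, dense_iff_closure_eq, Set.empty_ne_univ]
  · rw [coe_span_convexCone_eq_sub C hC]

theorem smul_mem_inter_neg {K : Set M} (hK : ∀ r : R, 0 ≤ r → ∀ y ∈ K, r • y ∈ K)
    (r : R) {y : M} (hy : y ∈ K ∩ -K) : r • y ∈ K ∩ -K := by
  obtain ⟨hy_pos, hy_neg⟩ := hy
  rcases le_total 0 r with hr | hr
  · exact ⟨hK r hr y hy_pos, by simpa using hK r hr (-y) hy_neg⟩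
  · have hr' : 0 ≤ -r := neg_nonneg.mpr hr
    exact ⟨by simpa using hK (-r) hr' (-y) hy_neg, by simpa using hK (-r) hr' y hy_pos⟩

end Cone

section Operators

theorem smulRight_eq_zero_iff {R M N : Type*} [Ring R] [IsDomain R] [TopologicalSpace R]
    [AddCommGroup M] [Module R M] [TopologicalSpace M]
    [AddCommGroup N] [Module R N] [Module.IsTorsionFree R N] [TopologicalSpace N]
    [ContinuousSMul R N] {f : StrongDual R M} {y : N} :
    f.smulRight y = 0 ↔ f = 0 ∨ y = 0 := by
  simp [ContinuousLinearMap.ext_iff, forall_or_right]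

theorem setOf_forall_mem_inter_neg {R M N : Type*} [Ring R]
    [AddCommGroup M] [Module R M] [TopologicalSpace M]
    [AddCommGroup N] [Module R N] [TopologicalSpace N] [IsTopologicalAddGroup N]
    (s : Set M) (K : Set N) :
    {T : M →L[R] N | ∀ x ∈ s, T x ∈ K} ∩ -{T : M →L[R] N | ∀ x ∈ s, T x ∈ K} =
      {T : M →L[R] N | ∀ x ∈ s, T x ∈ K ∩ -K} := by
  ext T
  exact forall₂_and.symm

variable {𝕜 X Y : Type*} [RCLike 𝕜] [AddCommGroup X] [Module 𝕜 X] [TopologicalSpace X]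
  [AddCommGroup Y] [Module 𝕜 Y] [TopologicalSpace Y]

theorem dense_span_iff_forall_dual_eq_zero [Module ℝ X] [IsScalarTower ℝ 𝕜 X]
    [IsTopologicalAddGroup X] [ContinuousSMul 𝕜 X] [LocallyConvexSpace ℝ X] (s : Set X) :
    Dense (Submodule.span 𝕜 s : Set X) ↔
      ∀ f : StrongDual 𝕜 X, (∀ x ∈ s, f x = 0) → f = 0 := by
  refine ⟨fun hs f hf ↦ ContinuousLinearMap.ext_on hs hf, fun h ↦ ?_⟩
  by_contra hs
  obtain ⟨x, hx⟩ : ∃ x, x ∉ closure (Submodule.span 𝕜 s : Set X) := by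
    simpa only [Dense, not_forall] using hs
  have hconv : Convex ℝ (Submodule.span 𝕜 s : Set X) :=
    ((Submodule.span 𝕜 s).restrictScalars ℝ).convex
  have : ContinuousSMul ℝ X := IsScalarTower.continuousSMul 𝕜
  obtain ⟨f, u, hfu, hux⟩ :=
    RCLike.geometric_hahn_banach_closed_point (𝕜 := 𝕜) hconv.closure isClosed_closure hx
  have hu : 0 < u := by simpa using hfu 0 (subset_closure (zero_mem _))
  -- `f` takes the value `u` at `(u / f a) • a` unless `f a = 0`.
  have hf : ∀ a ∈ s, f a = 0 := by
    intro a ha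
    by_contra hfa
    have hmem : ((u : 𝕜) / f a) • a ∈ Submodule.span 𝕜 s :=
      Submodule.smul_mem _ _ (Submodule.subset_span ha)
    simpa [hfa] using hfu _ (subset_closure hmem)
  have hu_neg : u < 0 := by simpa [h f hf] using hux
  exact lt_asymm hu hu_neg

theorem setOf_forall_mem_eq_singleton_zero_iff [Module ℝ X] [IsScalarTower ℝ 𝕜 X]
    [IsTopologicalAddGroup X] [ContinuousSMul 𝕜 X] [LocallyConvexSpace ℝ X]
    [Nontrivial (StrongDual 𝕜 X)] [ContinuousSMul 𝕜 Y] [T2Space Y] [Nontrivial Y]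
    (s : Set X) {L : Set Y} (hL : ∀ c : 𝕜, ∀ y ∈ L, c • y ∈ L) :
    {T : X →L[𝕜] Y | ∀ x ∈ s, T x ∈ L} = {0} ↔
      Dense (Submodule.span 𝕜 s : Set X) ∧ L = {0} := by
  constructor
  · intro h
    have hzero : ∀ T : X →L[𝕜] Y, (∀ x ∈ s, T x ∈ L) → T = 0 := fun T hT ↦ h.subset hT
    obtain ⟨g, hg⟩ := exists_ne (0 : StrongDual 𝕜 X)
    obtain ⟨y₀, hy₀⟩ := exists_ne (0 : Y)
    have hL_zero : ∀ y ∈ L, y = 0 := fun y hy ↦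
      (smulRight_eq_zero_iff.mp (hzero (g.smulRight y) fun x _ ↦ hL (g x) y hy)).resolve_left hg
    have hs : s.Nonempty := by
      rw [Set.nonempty_iff_ne_empty]
      rintro rfl
      exact smulRight_eq_zero_iff.not.mpr (not_or.mpr ⟨hg, hy₀⟩) (hzero _ (by simp))
    have zero_mem : (0 : Y) ∈ L :=
      have hT : (0 : X →L[𝕜] Y) ∈ {T : X →L[𝕜] Y | ∀ x ∈ s, T x ∈ L} := h.superset rfl
      hT _ hs.some_mem
    refine ⟨(dense_span_iff_forall_dual_eq_zero s).mpr fun f hf ↦ ?_,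
      Set.eq_singleton_iff_unique_mem.mpr ⟨zero_mem, hL_zero⟩⟩
    refine (smulRight_eq_zero_iff.mp (hzero (f.smulRight y₀) fun x hx ↦ ?_)).resolve_right hy₀
    simpa [hf x hx] using zero_mem
  · rintro ⟨hs, rfl⟩
    exact Set.eq_singleton_iff_unique_mem.mpr
      ⟨fun _ _ ↦ rfl, fun T hT ↦ ContinuousLinearMap.ext_on hs hT⟩

end Operators

theorem stmt_1_general
    {X : Type*} [AddCommGroup X] [Module ℝ X] [TopologicalSpace X] [IsTopologicalAddGroup X]
    [ContinuousSMul ℝ X] [LocallyConvexSpace ℝ X] [T1Space X] [Nontrivial X]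
    {Y : Type*} [AddCommGroup Y] [Module ℝ Y] [TopologicalSpace Y] [IsTopologicalAddGroup Y]
    [ContinuousSMul ℝ Y] [T2Space Y] [Nontrivial Y]
    (Cx : ConvexCone ℝ X)
    (Cy : Set Y) (hCy_smul : ∀ r : ℝ, 0 ≤ r → ∀ a ∈ Cy, r • a ∈ Cy) :
    ({T : X →L[ℝ] Y | ∀ x ∈ Cx, T x ∈ Cy} ∩ (-{T : X →L[ℝ] Y | ∀ x ∈ Cx, T x ∈ Cy}) = {0})
      ↔ (closure {z : X | ∃ a ∈ Cx, ∃ b ∈ Cx, z = a - b} = Set.univ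
          ∧ Cy ∩ (-Cy) = {0}) := by
  have hsub : {z : X | ∃ a ∈ Cx, ∃ b ∈ Cx, z = a - b} = (Cx : Set X) - (Cx : Set X) := by
    ext z
    simp only [Set.mem_ofPred_eq, Set.mem_sub, SetLike.mem_coe, eq_comm]
  rw [hsub, ← dense_iff_closure_eq, dense_sub_iff_dense_span,
    ← setOf_forall_mem_eq_singleton_zero_iff _ fun c _ hy ↦ smul_mem_inter_neg hCy_smul c hy,
    ← setOf_forall_mem_inter_neg]
  simp only [SetLike.mem_coe]

/-- For nonzero pre-ordered Banach spaces `X`, `Y` with closed cones,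
the cone `B(X,Y)₊ = {T | T Cx ⊆ Cy}` is proper if and only if
`X` is the norm closure of `Cx - Cx` and `Cy` is proper. -/
theorem stmt_1
    {X : Type*} [NormedAddCommGroup X] [NormedSpace ℝ X] [CompleteSpace X] [Nontrivial X]
    {Y : Type*} [NormedAddCommGroup Y] [NormedSpace ℝ Y] [CompleteSpace Y] [Nontrivial Y]
    (Cx : Set X) (hCx_closed : IsClosed Cx)
    (hCx_add : ∀ a ∈ Cx, ∀ b ∈ Cx, a + b ∈ Cx)
    (hCx_smul : ∀ r : ℝ, 0 ≤ r → ∀ a ∈ Cx, r • a ∈ Cx)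
    (Cy : Set Y) (hCy_closed : IsClosed Cy)
    (hCy_add : ∀ a ∈ Cy, ∀ b ∈ Cy, a + b ∈ Cy)
    (hCy_smul : ∀ r : ℝ, 0 ≤ r → ∀ a ∈ Cy, r • a ∈ Cy) :
    ({T : X →L[ℝ] Y | ∀ x ∈ Cx, T x ∈ Cy} ∩ (-{T : X →L[ℝ] Y | ∀ x ∈ Cx, T x ∈ Cy}) = {0})
      ↔ (closure {z : X | ∃ a ∈ Cx, ∃ b ∈ Cx, z = a - b} = Set.univ
          ∧ Cy ∩ (-Cy) = {0}) :=
  stmt_1_general ⟨Cx, fun _ hr _ ha ↦ hCx_smul _ hr.le _ ha, fun _ ha _ hb ↦ hCx_add _ ha _ hb⟩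
    Cy hCy_smul
end

section
/- Let X and Y be pre-ordered Banach spaces with closed cones and α, β > 0. If X is approximately α-conormal and Y is β-normal, then B(X,Y) is (2α+1)β-normal: for all T, S ∈ B(X,Y), 0 ≤ T ≤ S implies ‖T‖ ≤ (2α+1)β‖S‖. -/
/-! On the cone, `0 ≤ T c ≤ S c` and normality of `Y` give `‖T c‖ ≤ β ‖S‖ ‖c‖`. Conormality of `X`
writes any `x` as a difference `a - (a - x)` of cone elements with `‖a‖` at most about `α ‖x‖`, so
`‖a‖ + ‖a - x‖` is at most about `(2 α + 1) ‖x‖`. -/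

section Cones

variable {E F : Type*} [SeminormedAddCommGroup E] [SeminormedAddCommGroup F] {α : ℝ}
  {C : Set E}

/-- `α`-normality of the relation `x ≤ y ↔ y - x ∈ C`: if `0 ≤ x ≤ y` then `‖x‖ ≤ α ‖y‖`. The set
`C` of positive elements may be arbitrary. -/
def IsOrderNormal (α : ℝ) (C : Set E) : Prop :=
  ∀ x y : E, x ∈ C → y - x ∈ C → ‖x‖ ≤ α * ‖y‖

/-- Approximate `α`-conormality of the relation `x ≤ y ↔ y - x ∈ C`: up to any positive error in
the norm, every `x` lies below a positive element of norm at most `α ‖x‖`. The set `C` of positive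
elements may be arbitrary. -/
def IsApproxOrderConormal (α : ℝ) (C : Set E) : Prop :=
  ∀ x : E, ∀ ε : ℝ, 0 < ε → ∃ a ∈ C, a - x ∈ C ∧ ‖a‖ < α * ‖x‖ + ε

lemma IsApproxOrderConormal.exists_sub_eq_norm_add_norm_lt
    (hC : IsApproxOrderConormal α C) {x : E} {r : ℝ} (hr : (2 * α + 1) * ‖x‖ < r) :
    ∃ a ∈ C, ∃ b ∈ C, a - b = x ∧ ‖a‖ + ‖b‖ < r := by
  obtain ⟨a, ha, hax, ha_norm⟩ := hC x ((r - (2 * α + 1) * ‖x‖) / 2) (by linarith)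
  refine ⟨a, ha, a - x, hax, sub_sub_cancel a x, ?_⟩
  linarith [norm_sub_le a x]

lemma IsApproxOrderConormal.norm_map_le (hC : IsApproxOrderConormal α C)
    (f : E →+ F) {M : ℝ} (hM : 0 ≤ M) (hf : ∀ c ∈ C, ‖f c‖ ≤ M * ‖c‖) (x : E) :
    ‖f x‖ ≤ (2 * α + 1) * M * ‖x‖ := by
  suffices ‖f x‖ ≤ M * ((2 * α + 1) * ‖x‖) by linarith
  refine le_mul_of_forall_lt₀ fun M' hM' r hr ↦ ?_
  obtain ⟨a, ha, b, hb, rfl, hab⟩ := hC.exists_sub_eq_norm_add_norm_lt hr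
  calc
    ‖f (a - b)‖ = ‖f a - f b‖ := by rw [map_sub]
    _ ≤ ‖f a‖ + ‖f b‖ := norm_sub_le _ _
    _ ≤ M * ‖a‖ + M * ‖b‖ := add_le_add (hf a ha) (hf b hb)
    _ = M * (‖a‖ + ‖b‖) := (mul_add _ _ _).symm
    _ ≤ M' * r := mul_le_mul hM'.le hab.le (by positivity) (hM.trans hM'.le)

end Cones

section Operators

variable {𝕜 𝕜' : Type*} [NontriviallyNormedField 𝕜] [NontriviallyNormedField 𝕜'] {σ : 𝕜 →+* 𝕜'}
  {X Y : Type*} [SeminormedAddCommGroup X] [NormedSpace 𝕜 X]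
  [SeminormedAddCommGroup Y] [NormedSpace 𝕜' Y]

/-- The positive operators, with respect to arbitrary sets of positive elements: the bounded
semilinear operators sending the positive elements `Cx` of the domain into those, `Cy`, of the
codomain. -/
def positiveOperators (σ : 𝕜 →+* 𝕜') (Cx : Set X) (Cy : Set Y) : Set (X →SL[σ] Y) :=
  {T | ∀ x ∈ Cx, T x ∈ Cy}

variable [RingHomIsometric σ] {Cx : Set X} {Cy : Set Y} {α β : ℝ}

lemma IsOrderNormal.norm_apply_le_of_mem_positiveOperators (hCy : IsOrderNormal β Cy) (hβ : 0 ≤ β)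
    {T S : X →SL[σ] Y} (hT : T ∈ positiveOperators σ Cx Cy)
    (hST : S - T ∈ positiveOperators σ Cx Cy) {c : X} (hc : c ∈ Cx) :
    ‖T c‖ ≤ β * ‖S‖ * ‖c‖ :=
  calc
    ‖T c‖ ≤ β * ‖S c‖ := hCy (T c) (S c) (hT c hc) (hST c hc)
    _ ≤ β * (‖S‖ * ‖c‖) := by gcongr; exact S.le_opNorm c
    _ = β * ‖S‖ * ‖c‖ := (mul_assoc _ _ _).symm

theorem stmt_4_general (hα : 0 ≤ α) (hβ : 0 ≤ β) (hCx : IsApproxOrderConormal α Cx)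
    (hCy : IsOrderNormal β Cy) :
    IsOrderNormal ((2 * α + 1) * β) (positiveOperators σ Cx Cy) := by
  intro T S hT hST
  refine T.opNorm_le_bound (by positivity) fun x ↦ ?_
  have hT_cone : ∀ c ∈ Cx, ‖T c‖ ≤ β * ‖S‖ * ‖c‖ := fun c hc ↦
    hCy.norm_apply_le_of_mem_positiveOperators hβ hT hST hc
  calc
    ‖T x‖ ≤ (2 * α + 1) * (β * ‖S‖) * ‖x‖ :=
      hCx.norm_map_le (T : X →+ Y) (by positivity) hT_cone x
    _ = (2 * α + 1) * β * ‖S‖ * ‖x‖ := by ring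

end Operators

/-- If `X` is approximately `α`-conormal and `Y` is `β`-normal,
then `B(X,Y)` is `(2α+1)β`-normal. -/
theorem stmt_4
    {X : Type*} [NormedAddCommGroup X] [NormedSpace ℝ X] [CompleteSpace X]
    {Y : Type*} [NormedAddCommGroup Y] [NormedSpace ℝ Y] [CompleteSpace Y]
    (Cx : Set X) (hCx_closed : IsClosed Cx)
    (hCx_add : ∀ a ∈ Cx, ∀ b ∈ Cx, a + b ∈ Cx)
    (hCx_smul : ∀ r : ℝ, 0 ≤ r → ∀ a ∈ Cx, r • a ∈ Cx)
    (Cy : Set Y) (hCy_closed : IsClosed Cy)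
    (hCy_add : ∀ a ∈ Cy, ∀ b ∈ Cy, a + b ∈ Cy)
    (hCy_smul : ∀ r : ℝ, 0 ≤ r → ∀ a ∈ Cy, r • a ∈ Cy)
    (α β : ℝ) (hα : 0 < α) (hβ : 0 < β)
    (hXconormal : ∀ x : X, ∀ ε : ℝ, 0 < ε →
      ∃ a, a ∈ Cx ∧ a - x ∈ Cx ∧ ‖a‖ < α * ‖x‖ + ε)
    (hYnormal : ∀ x y : Y, x ∈ Cy → y - x ∈ Cy → ‖x‖ ≤ β * ‖y‖) :
    ∀ T S : X →L[ℝ] Y, (∀ x ∈ Cx, T x ∈ Cy) → (∀ x ∈ Cx, (S - T) x ∈ Cy) →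
      ‖T‖ ≤ (2 * α + 1) * β * ‖S‖ :=
  stmt_4_general hα.le hβ.le hXconormal hYnormal
end

section
/- If X is a pre-ordered Banach space with a closed generating cone and Y is a real Banach space, then the Robinson norm ‖·‖₊ is equivalent to the operator norm on B(X,Y): there exists α > 0 such that ‖T‖₊ ≤ ‖T‖ ≤ 2α‖T‖₊ for all T ∈ B(X,Y). -/
/-!
Functionals that are pointwise bounded on a spanning subset of a Banach space are pointwise bounded
everywhere, so by the uniform boundedness principle those with `‖f c‖ ≤ ‖c‖` on that subset are
bounded in norm. By the Hahn–Banach theorem the bound carries over to operators into any `Y`, with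
a constant that does not depend on `Y`. A generating cone spans, and by homogeneity `T` satisfies
`‖T c‖ ≤ ‖T‖₊ ‖c‖` on the cone.
-/

universe v

section SpanningSet

theorem exists_forall_norm_apply_le_of_mem_span {𝕜 E F ι : Type*} [NormedField 𝕜]
    [AddCommMonoid E] [Module 𝕜 E] [SeminormedAddCommGroup F] [NormedSpace 𝕜 F] {s : Set E}
    {g : ι → E →ₗ[𝕜] F} (h : ∀ x ∈ s, ∃ B, ∀ i, ‖g i x‖ ≤ B) {x : E}
    (hx : x ∈ Submodule.span 𝕜 s) : ∃ B, ∀ i, ‖g i x‖ ≤ B := by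
  induction hx using Submodule.span_induction with
  | mem x hx => exact h x hx
  | zero => exact ⟨0, fun i => by simp⟩
  | add x y _ _ hx hy =>
    obtain ⟨B, hB⟩ := hx
    obtain ⟨B', hB'⟩ := hy
    refine ⟨B + B', fun i => ?_⟩
    rw [map_add]
    exact norm_add_le_of_le (hB i) (hB' i)
  | smul a x _ hx =>
    obtain ⟨B, hB⟩ := hx
    refine ⟨‖a‖ * B, fun i => ?_⟩
    rw [map_smul, norm_smul]
    gcongr
    exact hB i

variable {𝕜 E : Type*} [SeminormedAddCommGroup E] {s : Set E}

theorem banach_steinhaus_of_span_eq_top [NontriviallyNormedField 𝕜] [NormedSpace 𝕜 E]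
    [CompleteSpace E] {F ι : Type*} [SeminormedAddCommGroup F] [NormedSpace 𝕜 F]
    (hs : Submodule.span 𝕜 s = ⊤) {g : ι → E →L[𝕜] F}
    (h : ∀ x ∈ s, ∃ B, ∀ i, ‖g i x‖ ≤ B) : ∃ B, ∀ i, ‖g i‖ ≤ B :=
  banach_steinhaus fun x =>
    exists_forall_norm_apply_le_of_mem_span (g := fun i => (g i : E →ₗ[𝕜] F)) h
      (hs ▸ Submodule.mem_top : x ∈ Submodule.span 𝕜 s)

variable [RCLike 𝕜] [NormedSpace 𝕜 E] [CompleteSpace E]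

theorem exists_forall_dual_norm_le_of_span_eq_top (hs : Submodule.span 𝕜 s = ⊤) :
    ∃ M : ℝ, 0 < M ∧ ∀ (f : StrongDual 𝕜 E) (k : ℝ), 0 ≤ k →
      (∀ c ∈ s, ‖f c‖ ≤ k * ‖c‖) → ‖f‖ ≤ M * k := by
  obtain ⟨M, hM⟩ : ∃ M, ∀ f : {f : StrongDual 𝕜 E // ∀ c ∈ s, ‖f c‖ ≤ ‖c‖}, ‖f.1‖ ≤ M :=
    banach_steinhaus_of_span_eq_top hs fun c hc => ⟨‖c‖, fun f => f.2 c hc⟩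
  refine ⟨max M 1, by positivity, fun f k hk hf => ?_⟩
  rcases hk.eq_or_lt with rfl | hk
  · have hdense : Dense (Submodule.span 𝕜 s : Set E) := by
      rw [hs]
      exact dense_univ
    have hf_zero : f = 0 := ContinuousLinearMap.ext_on hdense fun c hc => by simpa using hf c hc
    simp [hf_zero]
  · have hscaled : ∀ c ∈ s, ‖((k⁻¹ : ℝ) : 𝕜) • f c‖ ≤ ‖c‖ := fun c hc => by
      rw [norm_smul, RCLike.norm_ofReal, abs_of_pos (inv_pos.mpr hk), inv_mul_le_iff₀ hk]
      exact hf c hc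
    have hbound : ‖((k⁻¹ : ℝ) : 𝕜) • f‖ ≤ max M 1 := (hM ⟨_, hscaled⟩).trans (le_max_left M 1)
    rwa [norm_smul, RCLike.norm_ofReal, abs_of_pos (inv_pos.mpr hk), inv_mul_le_iff₀ hk,
      mul_comm] at hbound

theorem exists_forall_opNorm_le_of_span_eq_top (hs : Submodule.span 𝕜 s = ⊤) :
    ∃ M : ℝ, 0 < M ∧ ∀ (Y : Type v) [SeminormedAddCommGroup Y] [NormedSpace 𝕜 Y]
      (T : E →L[𝕜] Y) (k : ℝ), 0 ≤ k → (∀ c ∈ s, ‖T c‖ ≤ k * ‖c‖) → ‖T‖ ≤ M * k := by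
  obtain ⟨M, hM_pos, hM⟩ := exists_forall_dual_norm_le_of_span_eq_top hs
  refine ⟨M, hM_pos, fun Y _ _ T k hk hT => T.opNorm_le_bound (by positivity) fun x => ?_⟩
  obtain ⟨g, hg_norm, hg_apply⟩ := exists_dual_vector'' 𝕜 (T x)
  have hgT : ∀ c ∈ s, ‖g.comp T c‖ ≤ k * ‖c‖ := fun c hc =>
    (g.le_of_opNorm_le hg_norm (T c)).trans (by simpa using hT c hc)
  calc
    ‖T x‖ = ‖g.comp T x‖ := by simp [hg_apply]
    _ ≤ M * k * ‖x‖ := (g.comp T).le_of_opNorm_le (hM _ k hk hgT) x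

end SpanningSet

section RobinsonNorm

variable {X Y : Type*} [SeminormedAddCommGroup X] [NormedSpace ℝ X] [SeminormedAddCommGroup Y]
  [NormedSpace ℝ Y] {C : Set X}

/-- The Robinson norm `‖T‖₊` of an operator `T` relative to a set `C`, usually the cone of positive
elements: the supremum of `‖T x‖` over the unit vectors `x` of `C`, which is `0` if `C` has none. -/
noncomputable def robinsonNorm (C : Set X) (T : X →L[ℝ] Y) : ℝ :=
  sSup {r : ℝ | ∃ x, x ∈ C ∧ ‖x‖ = 1 ∧ r = ‖T x‖}

theorem robinsonNorm_nonneg (C : Set X) (T : X →L[ℝ] Y) : 0 ≤ robinsonNorm C T := by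
  refine Real.sSup_nonneg ?_
  rintro _ ⟨x, -, -, rfl⟩
  exact norm_nonneg _

theorem robinsonNorm_le_opNorm (C : Set X) (T : X →L[ℝ] Y) : robinsonNorm C T ≤ ‖T‖ := by
  refine Real.sSup_le ?_ (norm_nonneg T)
  rintro _ ⟨x, -, hx, rfl⟩
  exact T.unit_le_opNorm x hx.le

theorem norm_apply_le_robinsonNorm {x : X} (T : X →L[ℝ] Y) (hxC : x ∈ C) (hx : ‖x‖ = 1) :
    ‖T x‖ ≤ robinsonNorm C T := by
  refine le_csSup ⟨‖T‖, ?_⟩ ⟨x, hxC, hx, rfl⟩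
  rintro _ ⟨y, -, hy, rfl⟩
  exact T.unit_le_opNorm y hy.le

theorem norm_apply_le_robinsonNorm_mul_norm
    (hC_smul : ∀ r : ℝ, 0 < r → ∀ a ∈ C, r • a ∈ C) (T : X →L[ℝ] Y) {x : X} (hxC : x ∈ C) :
    ‖T x‖ ≤ robinsonNorm C T * ‖x‖ := by
  rcases (norm_nonneg x).eq_or_lt with hx | hx
  · simp [norm_image_of_norm_eq_zero T T.continuous hx.symm, ← hx]
  · have hunit : ‖‖x‖⁻¹ • x‖ = 1 := by
      rw [norm_smul, norm_inv, norm_norm, inv_mul_cancel₀ hx.ne']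
    have hle := norm_apply_le_robinsonNorm T (hC_smul _ (inv_pos.mpr hx) x hxC) hunit
    rwa [map_smul, norm_smul, norm_inv, norm_norm, inv_mul_le_iff₀ hx, mul_comm] at hle

end RobinsonNorm

theorem span_eq_top_of_forall_exists_eq_sub {R M : Type*} [Ring R] [AddCommGroup M] [Module R M]
    {s : Set M} (h : ∀ x, ∃ a ∈ s, ∃ b ∈ s, x = a - b) : Submodule.span R s = ⊤ := by
  refine Submodule.eq_top_iff'.mpr fun x => ?_
  obtain ⟨a, ha, b, hb, rfl⟩ := h x
  exact sub_mem (Submodule.subset_span ha) (Submodule.subset_span hb)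

theorem stmt_7_general {X : Type*} [SeminormedAddCommGroup X] [NormedSpace ℝ X] [CompleteSpace X]
    {C : Set X} (hC_smul : ∀ r : ℝ, 0 < r → ∀ a ∈ C, r • a ∈ C)
    (hC_span : Submodule.span ℝ C = ⊤) :
    ∃ α : ℝ, 0 < α ∧ ∀ (Y : Type v) [SeminormedAddCommGroup Y] [NormedSpace ℝ Y] (T : X →L[ℝ] Y),
      robinsonNorm C T ≤ ‖T‖ ∧ ‖T‖ ≤ 2 * α * robinsonNorm C T := by
  obtain ⟨M, hM_pos, hM⟩ := exists_forall_opNorm_le_of_span_eq_top hC_span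
  refine ⟨M / 2, half_pos hM_pos, fun Y _ _ T => ⟨robinsonNorm_le_opNorm C T, ?_⟩⟩
  rw [mul_div_cancel₀ M two_ne_zero]
  exact hM Y T _ (robinsonNorm_nonneg C T) fun c hc =>
    norm_apply_le_robinsonNorm_mul_norm hC_smul T hc

/-- If `X` is a pre-ordered Banach space with a closed generating cone and
`Y` a Banach space, then the Robinson norm `‖T‖₊ = sup {‖Tx‖ : x ∈ C, ‖x‖ = 1}` is
equivalent to the operator norm: there is `α > 0` with
`‖T‖₊ ≤ ‖T‖ ≤ 2α‖T‖₊` for all `T`. -/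
theorem stmt_7
    {X : Type*} [NormedAddCommGroup X] [NormedSpace ℝ X] [CompleteSpace X]
    {Y : Type*} [NormedAddCommGroup Y] [NormedSpace ℝ Y] [CompleteSpace Y]
    (C : Set X) (hC_closed : IsClosed C)
    (hC_add : ∀ a ∈ C, ∀ b ∈ C, a + b ∈ C)
    (hC_smul : ∀ r : ℝ, 0 ≤ r → ∀ a ∈ C, r • a ∈ C)
    (hC_gen : ∀ x : X, ∃ a ∈ C, ∃ b ∈ C, x = a - b) :
    ∃ α : ℝ, 0 < α ∧ ∀ T : X →L[ℝ] Y,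
      sSup {r : ℝ | ∃ x, x ∈ C ∧ ‖x‖ = 1 ∧ r = ‖T x‖} ≤ ‖T‖ ∧
      ‖T‖ ≤ 2 * α * sSup {r : ℝ | ∃ x, x ∈ C ∧ ‖x‖ = 1 ∧ r = ‖T x‖} := by
  obtain ⟨α, hα_pos, hα⟩ := stmt_7_general (fun r hr => hC_smul r hr.le)
    (span_eq_top_of_forall_exists_eq_sub hC_gen)
  exact ⟨α, hα_pos, hα Y⟩
end

section
/- Let X and Y be pre-ordered Banach spaces with closed cones. Each of the following conditions is sufficient for the operator norm on B(X,Y) to be positively attained: (1) X is approximately 1-max-conormal and Y is 1-max-normal; (2) X is approximately 1-absolutely conormal and Y is absolutely monotone; (3) X is approximately 1-sum-conormal, in which case moreover ‖T‖ = ‖T‖₊ holds for ALL T ∈ B(X,Y). -/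
/-!
A bound `‖T a‖ ≤ ‖T‖₊ * ‖a‖` on the cone extends to every `x`, up to an error proportional to `ε`,
by means of a nearly optimal conormality witness. If `x = a - b` with `0 ≤ a, b` and `0 ≤ T`, then
`-T b ≤ T x ≤ T a`; if `±x ≤ a` and `0 ≤ T`, then `±T x ≤ T a`. In both cases normality of the
codomain controls `T x`. In the sum-conormal case the triangle inequality does, for every `T`.
-/

open Set
open scoped NNReal

section Conormality

variable {E : Type*} [SeminormedAddCommGroup E]

/-- Approximate `α`-max-conormality of a space with positive elements `C`. -/
def ApproxMaxConormal (α : ℝ≥0) (C : Set E) : Prop :=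
  ∀ x : E, ∀ ε : ℝ, 0 < ε → ∃ a ∈ C, ∃ b ∈ C, x = a - b ∧ max ‖a‖ ‖b‖ < α * ‖x‖ + ε

/-- Approximate `α`-absolute conormality of a space with positive elements `C`. The relation
`±x ≤ a` is written `a - x ∈ C` and `a + x ∈ C`. -/
def ApproxAbsConormal (α : ℝ≥0) (C : Set E) : Prop :=
  ∀ x : E, ∀ ε : ℝ, 0 < ε → ∃ a, a ∈ C ∧ a - x ∈ C ∧ a + x ∈ C ∧ ‖a‖ < α * ‖x‖ + ε

/-- Approximate `α`-sum-conormality of a space with positive elements `C`. -/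
def ApproxSumConormal (α : ℝ≥0) (C : Set E) : Prop :=
  ∀ x : E, ∀ ε : ℝ, 0 < ε → ∃ a ∈ C, ∃ b ∈ C, x = a - b ∧ ‖a‖ + ‖b‖ < α * ‖x‖ + ε

/-- `β`-max-normality of a space with positive elements `D`: the norm of `x` is controlled whenever
`z ≤ x ≤ y`. -/
def MaxNormal (β : ℝ≥0) (D : Set E) : Prop :=
  ∀ x y z : E, x - z ∈ D → y - x ∈ D → ‖x‖ ≤ β * max ‖y‖ ‖z‖

/-- `β`-absolute normality of a space with positive elements `D`: the norm of `x` is controlled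
whenever `±x ≤ y`. Absolute monotonicity is the case `β = 1`. -/
def AbsNormal (β : ℝ≥0) (D : Set E) : Prop :=
  ∀ x y : E, y - x ∈ D → y + x ∈ D → ‖x‖ ≤ β * ‖y‖

end Conormality

section PositiveOperatorNorm

variable {X Y : Type*} [SeminormedAddCommGroup X] [NormedSpace ℝ X]
  [SeminormedAddCommGroup Y] [NormedSpace ℝ Y]
  {C : Set X} {D : Set Y} {T : X →L[ℝ] Y} {α β : ℝ≥0}

/-- The quantity `‖T‖₊`, for a space with positive elements `C`. It is `sSup ∅ = 0` if `C` has no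
element of norm one. -/
noncomputable def posOpNorm (C : Set X) (T : X →L[ℝ] Y) : ℝ :=
  sSup {r : ℝ | ∃ x, x ∈ C ∧ ‖x‖ = 1 ∧ r = ‖T x‖}

theorem posOpNorm_nonneg : 0 ≤ posOpNorm C T :=
  Real.sSup_nonneg <| by rintro _ ⟨x, -, -, rfl⟩; exact norm_nonneg _

theorem posOpNorm_le_opNorm : posOpNorm C T ≤ ‖T‖ :=
  Real.sSup_le (by rintro _ ⟨x, -, hx, rfl⟩; exact T.unit_le_opNorm x hx.le) (norm_nonneg _)

theorem norm_apply_le_posOpNorm {x : X} (hx : x ∈ C) (hx1 : ‖x‖ = 1) :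
    ‖T x‖ ≤ posOpNorm C T :=
  le_csSup ⟨‖T‖, by rintro _ ⟨y, -, hy, rfl⟩; exact T.unit_le_opNorm y hy.le⟩ ⟨x, hx, hx1, rfl⟩

theorem norm_apply_le_posOpNorm_mul_norm (hsmul : ∀ r : ℝ, 0 < r → ∀ a ∈ C, r • a ∈ C)
    {a : X} (ha : a ∈ C) : ‖T a‖ ≤ posOpNorm C T * ‖a‖ := by
  rcases (norm_nonneg a).eq_or_lt' with h0 | hpos
  · simpa [h0] using T.le_opNorm a
  · have hunit : ‖‖a‖⁻¹ • a‖ = 1 := by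
      rw [norm_smul, norm_inv, norm_norm, inv_mul_cancel₀ hpos.ne']
    have hle := norm_apply_le_posOpNorm (T := T) (hsmul _ (inv_pos.2 hpos) a ha) hunit
    rwa [map_smul, norm_smul, norm_inv, norm_norm, inv_mul_le_iff₀' hpos] at hle

theorem opNorm_le_mul_of_forall_pos_le_mul_add {K : ℝ} (hK : 0 ≤ K)
    (h : ∀ x : X, ∀ ε : ℝ, 0 < ε → ‖T x‖ ≤ K * (α * ‖x‖ + ε)) : ‖T‖ ≤ K * α := by
  refine T.opNorm_le_bound (by positivity) fun x ↦ ?_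
  have hlim : ContinuousWithinAt (fun ε ↦ K * (α * ‖x‖ + ε)) (Ioi 0) 0 :=
    Continuous.continuousWithinAt (by fun_prop)
  simpa [mul_assoc] using ge_of_tendsto hlim (eventually_mem_nhdsWithin.mono (h x))

theorem ApproxMaxConormal.opNorm_le_mul_posOpNorm (hα : ApproxMaxConormal α C)
    (hβ : MaxNormal β D) (hsmul : ∀ r : ℝ, 0 < r → ∀ a ∈ C, r • a ∈ C) (hT : MapsTo T C D) :
    ‖T‖ ≤ β * posOpNorm C T * α := by
  have hpos : 0 ≤ posOpNorm C T := posOpNorm_nonneg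
  refine opNorm_le_mul_of_forall_pos_le_mul_add (by positivity) fun x ε hε ↦ ?_
  obtain ⟨a, ha, b, hb, rfl, hab⟩ := hα x ε hε
  have hlower : T (a - b) - -T b ∈ D := by simpa using hT ha
  have hupper : T a - T (a - b) ∈ D := by simpa using hT hb
  calc ‖T (a - b)‖ ≤ β * max ‖T a‖ ‖T b‖ := by simpa using hβ _ _ _ hlower hupper
    _ ≤ β * max (posOpNorm C T * ‖a‖) (posOpNorm C T * ‖b‖) := by
      gcongr <;> exact norm_apply_le_posOpNorm_mul_norm hsmul ‹_›
    _ = β * posOpNorm C T * max ‖a‖ ‖b‖ := by rw [← mul_max_of_nonneg _ _ hpos, mul_assoc]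
    _ ≤ β * posOpNorm C T * (α * ‖a - b‖ + ε) := by gcongr

theorem ApproxAbsConormal.opNorm_le_mul_posOpNorm (hα : ApproxAbsConormal α C)
    (hβ : AbsNormal β D) (hsmul : ∀ r : ℝ, 0 < r → ∀ a ∈ C, r • a ∈ C) (hT : MapsTo T C D) :
    ‖T‖ ≤ β * posOpNorm C T * α := by
  have hpos : 0 ≤ posOpNorm C T := posOpNorm_nonneg
  refine opNorm_le_mul_of_forall_pos_le_mul_add (by positivity) fun x ε hε ↦ ?_
  obtain ⟨a, ha, hsub, hadd, hax⟩ := hα x ε hε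
  have hTsub : T a - T x ∈ D := by simpa using hT hsub
  have hTadd : T a + T x ∈ D := by simpa using hT hadd
  calc ‖T x‖ ≤ β * ‖T a‖ := hβ _ _ hTsub hTadd
    _ ≤ β * (posOpNorm C T * ‖a‖) := by gcongr; exact norm_apply_le_posOpNorm_mul_norm hsmul ha
    _ = β * posOpNorm C T * ‖a‖ := (mul_assoc _ _ _).symm
    _ ≤ β * posOpNorm C T * (α * ‖x‖ + ε) := by gcongr

theorem ApproxSumConormal.opNorm_le_mul_posOpNorm (hα : ApproxSumConormal α C)
    (hsmul : ∀ r : ℝ, 0 < r → ∀ a ∈ C, r • a ∈ C) : ‖T‖ ≤ posOpNorm C T * α := by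
  have hpos : 0 ≤ posOpNorm C T := posOpNorm_nonneg
  refine opNorm_le_mul_of_forall_pos_le_mul_add hpos fun x ε hε ↦ ?_
  obtain ⟨a, ha, b, hb, rfl, hab⟩ := hα x ε hε
  calc ‖T (a - b)‖ ≤ ‖T a‖ + ‖T b‖ := by rw [map_sub]; exact norm_sub_le _ _
    _ ≤ posOpNorm C T * ‖a‖ + posOpNorm C T * ‖b‖ := by
      gcongr <;> exact norm_apply_le_posOpNorm_mul_norm hsmul ‹_›
    _ = posOpNorm C T * (‖a‖ + ‖b‖) := (mul_add _ _ _).symm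
    _ ≤ posOpNorm C T * (α * ‖a - b‖ + ε) := by gcongr

theorem stmt_10_general (hsmul : ∀ r : ℝ, 0 < r → ∀ a ∈ C, r • a ∈ C) :
    (ApproxMaxConormal 1 C ∧ MaxNormal 1 D →
      ∀ T : X →L[ℝ] Y, MapsTo T C D → ‖T‖ = posOpNorm C T)
    ∧ (ApproxAbsConormal 1 C ∧ AbsNormal 1 D →
      ∀ T : X →L[ℝ] Y, MapsTo T C D → ‖T‖ = posOpNorm C T)
    ∧ (ApproxSumConormal 1 C → ∀ T : X →L[ℝ] Y, ‖T‖ = posOpNorm C T) := by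
  refine ⟨fun ⟨hX, hY⟩ T hT ↦ ?_, fun ⟨hX, hY⟩ T hT ↦ ?_, fun hX T ↦ ?_⟩ <;>
    refine le_antisymm ?_ posOpNorm_le_opNorm
  · simpa using hX.opNorm_le_mul_posOpNorm hY hsmul hT
  · simpa using hX.opNorm_le_mul_posOpNorm hY hsmul hT
  · simpa using hX.opNorm_le_mul_posOpNorm hsmul

end PositiveOperatorNorm

/-- Sufficient conditions for the operator norm on `B(X,Y)` to be
positively attained: (1) `X` approximately `1`-max-conormal and `Y` `1`-max-normal;
(2) `X` approximately `1`-absolutely conormal and `Y` absolutely monotone;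
(3) `X` approximately `1`-sum-conormal, in which case `‖T‖ = ‖T‖₊` for ALL `T`. -/
theorem stmt_10
    {X : Type*} [NormedAddCommGroup X] [NormedSpace ℝ X] [CompleteSpace X]
    {Y : Type*} [NormedAddCommGroup Y] [NormedSpace ℝ Y] [CompleteSpace Y]
    (Cx : Set X) (hCx_closed : IsClosed Cx)
    (hCx_add : ∀ a ∈ Cx, ∀ b ∈ Cx, a + b ∈ Cx)
    (hCx_smul : ∀ r : ℝ, 0 ≤ r → ∀ a ∈ Cx, r • a ∈ Cx)
    (Cy : Set Y) (hCy_closed : IsClosed Cy)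
    (hCy_add : ∀ a ∈ Cy, ∀ b ∈ Cy, a + b ∈ Cy)
    (hCy_smul : ∀ r : ℝ, 0 ≤ r → ∀ a ∈ Cy, r • a ∈ Cy) :
    (((∀ x : X, ∀ ε : ℝ, 0 < ε →
          ∃ a ∈ Cx, ∃ b ∈ Cx, x = a - b ∧ max ‖a‖ ‖b‖ < ‖x‖ + ε) ∧
       (∀ x y z : Y, x - z ∈ Cy → y - x ∈ Cy → ‖x‖ ≤ max ‖y‖ ‖z‖)) →
      ∀ T : X →L[ℝ] Y, (∀ x ∈ Cx, T x ∈ Cy) →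
        ‖T‖ = sSup {r : ℝ | ∃ x, x ∈ Cx ∧ ‖x‖ = 1 ∧ r = ‖T x‖})
    ∧ (((∀ x : X, ∀ ε : ℝ, 0 < ε →
          ∃ a, a ∈ Cx ∧ a - x ∈ Cx ∧ a + x ∈ Cx ∧ ‖a‖ < ‖x‖ + ε) ∧
       (∀ x y : Y, y - x ∈ Cy → y + x ∈ Cy → ‖x‖ ≤ ‖y‖)) →
      ∀ T : X →L[ℝ] Y, (∀ x ∈ Cx, T x ∈ Cy) →
        ‖T‖ = sSup {r : ℝ | ∃ x, x ∈ Cx ∧ ‖x‖ = 1 ∧ r = ‖T x‖})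
    ∧ ((∀ x : X, ∀ ε : ℝ, 0 < ε →
          ∃ a ∈ Cx, ∃ b ∈ Cx, x = a - b ∧ ‖a‖ + ‖b‖ < ‖x‖ + ε) →
      ∀ T : X →L[ℝ] Y,
        ‖T‖ = sSup {r : ℝ | ∃ x, x ∈ Cx ∧ ‖x‖ = 1 ∧ r = ‖T x‖}) := by
  simpa only [ApproxMaxConormal, MaxNormal, ApproxAbsConormal, AbsNormal, ApproxSumConormal,
    MapsTo, posOpNorm, NNReal.coe_one, one_mul] using
    stmt_10_general (D := Cy) fun r hr ↦ hCx_smul r hr.le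
end

section
/- If X is an υ-quasi-lattice or a μ-quasi-lattice, then the cone X₊ is proper (X₊ ∩ (−X₊) = {0}) and generating (X = X₊ − X₊). -/
/-!
Generating: an upper bound `z` of `{x, 0}` gives `x = z - (z - x)`.

Proper: let `x` and `-x` both lie in the cone. In an `υ`-quasi-lattice, `x` and `0` are then both
upper bounds of `{x, 0}`, and by the triangle inequality both minimize `σ_{x,0}` over the whole
space; uniqueness of the minimizer gives `x = 0`. In a `μ`-quasi-lattice, let `z` be a minimal
upper bound of some pair: then `z + x` is an upper bound below `z`, so `z + x = z`.
-/

section ConeOrder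

variable {X : Type*} [AddCommGroup X]

/-- The set `υ({x, y})` of upper bounds of a pair, for the relation `x ≤ y ↔ y - x ∈ C`. -/
def coneUpperBounds (C : Set X) (x y : X) : Set X :=
  {z | z - x ∈ C ∧ z - y ∈ C}

/-- The set `μ({x, y})` of minimal upper bounds of a pair. The relation `x ≤ y ↔ y - x ∈ C` need
not be antisymmetric, so asking for `w = z` is stronger than Mathlib's `Minimal`, which asks only
for `z ≤ w`. -/
def coneMinimalUpperBounds (C : Set X) (x y : X) : Set X :=
  {z | z ∈ coneUpperBounds C x y ∧ ∀ w ∈ coneUpperBounds C x y, z - w ∈ C → w = z}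

theorem exists_eq_sub_of_coneUpperBounds_nonempty {C : Set X} {x : X}
    (h : (coneUpperBounds C x 0).Nonempty) : ∃ a ∈ C, ∃ b ∈ C, x = a - b := by
  obtain ⟨z, hzx, hz⟩ := h
  rw [sub_zero] at hz
  exact ⟨z, hz, z - x, hzx, (sub_sub_cancel z x).symm⟩

variable {C : AddSubmonoid X} {x y : X}

theorem add_mem_coneUpperBounds {z a : X} (hz : z ∈ coneUpperBounds C x y) (ha : a ∈ C) :
    z + a ∈ coneUpperBounds C x y :=
  ⟨by simpa only [SetLike.mem_coe, add_sub_right_comm] using C.add_mem hz.1 ha,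
    by simpa only [SetLike.mem_coe, add_sub_right_comm] using C.add_mem hz.2 ha⟩

theorem isPointed_of_coneMinimalUpperBounds_nonempty
    (h : (coneMinimalUpperBounds (C : Set X) x y).Nonempty) : C.IsPointed := by
  obtain ⟨z, hz, hz_min⟩ := h
  intro a ha hna
  have hza : z - (z + a) ∈ C := by rwa [sub_add_cancel_left]
  exact add_eq_left.mp (hz_min (z + a) (add_mem_coneUpperBounds hz ha) hza)

end ConeOrder

section QuasiLattice

variable {X : Type*} [SeminormedAddCommGroup X]

/-- The function `σ_{x,y}`, whose minimizers among the (minimal) upper bounds of `{x, y}` play the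
role of the supremum in a quasi-lattice. -/
def sumDist (x y z : X) : ℝ :=
  ‖z - x‖ + ‖z - y‖

/-- `X`, pre-ordered by `C`, is an `υ`-quasi-lattice: `σ_{x,y}` has a unique minimizer on the
upper bounds of each pair `{x, y}`. -/
def IsUpsilonQuasiLattice (C : Set X) : Prop :=
  ∀ x y : X, ∃! z, z ∈ coneUpperBounds C x y ∧ IsMinOn (sumDist x y) (coneUpperBounds C x y) z

/-- `X`, pre-ordered by `C`, is a `μ`-quasi-lattice: `σ_{x,y}` has a unique minimizer on the
minimal upper bounds of each pair `{x, y}`. -/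
def IsMuQuasiLattice (C : Set X) : Prop :=
  ∀ x y : X, ∃! z, z ∈ coneMinimalUpperBounds C x y ∧
    IsMinOn (sumDist x y) (coneMinimalUpperBounds C x y) z

theorem isMinOn_sumDist_left (x y : X) (s : Set X) : IsMinOn (sumDist x y) s x := fun w _ ↦ by
  simpa [sumDist, norm_sub_rev w x] using norm_sub_le_norm_sub_add_norm_sub x w y

theorem isMinOn_sumDist_right (x y : X) (s : Set X) : IsMinOn (sumDist x y) s y := fun w _ ↦ by
  simpa [sumDist, norm_sub_rev w y, add_comm] using norm_sub_le_norm_sub_add_norm_sub y w x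

theorem IsMuQuasiLattice.coneMinimalUpperBounds_nonempty {C : Set X} (h : IsMuQuasiLattice C)
    (x y : X) : (coneMinimalUpperBounds C x y).Nonempty :=
  (h x y).exists.imp fun _ hz ↦ hz.1

theorem coneUpperBounds_nonempty {C : Set X} (h : IsUpsilonQuasiLattice C ∨ IsMuQuasiLattice C)
    (x y : X) : (coneUpperBounds C x y).Nonempty := by
  rcases h with hυ | hμ
  · exact (hυ x y).exists.imp fun _ hz ↦ hz.1
  · exact (hμ.coneMinimalUpperBounds_nonempty x y).mono fun _ hz ↦ hz.1

theorem IsUpsilonQuasiLattice.isPointed {C : AddSubmonoid X}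
    (h : IsUpsilonQuasiLattice (C : Set X)) : C.IsPointed := by
  intro x hx hnx
  have hx_upper : x ∈ coneUpperBounds (C : Set X) x 0 := by simpa [coneUpperBounds] using hx
  have h0_upper : 0 ∈ coneUpperBounds (C : Set X) x 0 := by simpa [coneUpperBounds] using hnx
  exact (h x 0).unique ⟨hx_upper, isMinOn_sumDist_left x 0 _⟩
    ⟨h0_upper, isMinOn_sumDist_right x 0 _⟩

theorem stmt_11_general {C : AddSubmonoid X}
    (h : IsUpsilonQuasiLattice (C : Set X) ∨ IsMuQuasiLattice (C : Set X)) :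
    (C : Set X) ∩ -(C : Set X) = {0} ∧ ∀ x : X, ∃ a ∈ C, ∃ b ∈ C, x = a - b := by
  have h_pointed : C.IsPointed := by
    rcases h with hυ | hμ
    · exact hυ.isPointed
    · exact isPointed_of_coneMinimalUpperBounds_nonempty (hμ.coneMinimalUpperBounds_nonempty 0 0)
  refine ⟨?_, fun x ↦ exists_eq_sub_of_coneUpperBounds_nonempty (coneUpperBounds_nonempty h x 0)⟩
  exact congrArg SetLike.coe h_pointed.support_eq_bot

end QuasiLattice

/-- If `X` is an `υ`-quasi-lattice or a `μ`-quasi-lattice, then its cone is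
proper and generating. Here, for `x y : X`, the upper bounds of `{x,y}` are
`{z | z - x ∈ C ∧ z - y ∈ C}`, the minimal upper bounds are those upper bounds `z` such
that any upper bound `w` with `w ≤ z` equals `z`, and `σ_{x,y}(z) = ‖z - x‖ + ‖z - y‖`. -/
theorem stmt_11
    {X : Type*} [NormedAddCommGroup X] [NormedSpace ℝ X] [CompleteSpace X]
    (C : Set X) (hC_closed : IsClosed C)
    (hC_add : ∀ a ∈ C, ∀ b ∈ C, a + b ∈ C)
    (hC_smul : ∀ r : ℝ, 0 ≤ r → ∀ a ∈ C, r • a ∈ C)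
    (hquasi :
      -- υ-quasi-lattice
      (∀ x y : X, ∃! z : X,
        (z - x ∈ C ∧ z - y ∈ C) ∧
        ∀ w : X, (w - x ∈ C ∧ w - y ∈ C) →
          ‖z - x‖ + ‖z - y‖ ≤ ‖w - x‖ + ‖w - y‖)
      ∨
      -- μ-quasi-lattice
      (∀ x y : X, ∃! z : X,
        ((z - x ∈ C ∧ z - y ∈ C) ∧
          ∀ w : X, (w - x ∈ C ∧ w - y ∈ C) → z - w ∈ C → w = z) ∧
        ∀ w : X, ((w - x ∈ C ∧ w - y ∈ C) ∧
            ∀ u : X, (u - x ∈ C ∧ u - y ∈ C) → w - u ∈ C → u = w) →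
          ‖z - x‖ + ‖z - y‖ ≤ ‖w - x‖ + ‖w - y‖)) :
    C ∩ (-C) = {0} ∧ ∀ x : X, ∃ a ∈ C, ∃ b ∈ C, x = a - b := by
  obtain ⟨z, hz, -⟩ := coneUpperBounds_nonempty hquasi 0 0
  have hC_zero : 0 ∈ C := by simpa only [zero_smul] using hC_smul 0 le_rfl (z - 0) hz
  exact stmt_11_general (C := ⟨⟨C, fun {a b} ha hb ↦ hC_add a ha b hb⟩, hC_zero⟩) hquasi
end

section
/- Let X be an υ-quasi-lattice, with quasi-supremum x∨̃y, quasi-infimum x∧̃y := −((−x)∨̃(−y)), x⁺ := 0∨̃x, x⁻ := 0∨̃(−x), and quasi-absolute value ⌈x⌉ := (−x)∨̃x. Then for all x, y, z ∈ X and all α ≥ 0: x∨̃x = x; (αx)∨̃(αy) = α(x∨̃y); (x∨̃y) + z = (x+z)∨̃(y+z); x = x⁺ − x⁻; x⁺∧̃x⁻ = 0; ⌈x⌉ = x⁺ + x⁻; x∨̃y + x∧̃y = x + y; x∨̃y − x∧̃y = ⌈x − y⌉; and x∨̃y = ½(x+y) + ½⌈x − y⌉. -/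
/-!
Being a quasi-supremum is symmetric in the two points and compatible with translations and with
positive dilations, so by uniqueness the operation `∨̃` is commutative, translation equivariant and
positively homogeneous. Commutativity, translation equivariance and the single instance
`2x ∨̃ 2y = 2(x ∨̃ y)` of homogeneity already imply the other identities, in any abelian group:
for instance `0 ∨̃ 0 = 2(0 ∨̃ 0)` gives `0 ∨̃ 0 = 0`, and `⌈x⌉ = (0 ∨̃ 2x) - x = 2x⁺ - x = x⁺ + x⁻`.
-/

section Algebra

variable {G : Type*} [AddCommGroup G]

/-- The quasi-infimum `x ∧̃ y = -((-x) ∨̃ (-y))` attached to an operation `s = ∨̃`. -/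
def quasiInf (s : G → G → G) (x y : G) : G := -s (-x) (-y)

/-- The positive part `x⁺ = 0 ∨̃ x` attached to an operation `s = ∨̃`. -/
def quasiPos (s : G → G → G) (x : G) : G := s 0 x

/-- The negative part `x⁻ = 0 ∨̃ (-x)` attached to an operation `s = ∨̃`. -/
def quasiNeg (s : G → G → G) (x : G) : G := s 0 (-x)

/-- The quasi-absolute value `⌈x⌉ = (-x) ∨̃ x` attached to an operation `s = ∨̃`. -/
def quasiAbs (s : G → G → G) (x : G) : G := s (-x) x

/-- The algebraic properties of a supremum operation on an abelian group that yield the vector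
lattice identities. Doubling stands in for positive homogeneity, which needs real scalars, and
associativity is omitted because quasi-suprema need not be associative. -/
structure IsSupLike (s : G → G → G) : Prop where
  comm (x y : G) : s x y = s y x
  add_right (x y z : G) : s x y + z = s (x + z) (y + z)
  two_nsmul (x y : G) : s (2 • x) (2 • y) = 2 • s x y

namespace IsSupLike

variable {s : G → G → G} (hs : IsSupLike s)

include hs

theorem sub_right (x y z : G) : s x y - z = s (x - z) (y - z) := by
  simpa only [sub_eq_add_neg] using hs.add_right x y (-z)

theorem zero_zero : s 0 0 = 0 := by
  have h := hs.two_nsmul 0 0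
  rwa [smul_zero, _root_.two_nsmul, left_eq_add] at h

theorem self (x : G) : s x x = x := by
  simpa only [hs.zero_zero, zero_add] using (hs.add_right 0 0 x).symm

theorem quasiNeg_eq_quasiPos_sub (x : G) : quasiNeg s x = quasiPos s x - x := by
  rw [quasiNeg, quasiPos, hs.sub_right, zero_sub, sub_self, hs.comm]

theorem quasiPos_sub_quasiNeg (x : G) : quasiPos s x - quasiNeg s x = x := by
  rw [hs.quasiNeg_eq_quasiPos_sub, sub_sub_cancel]

theorem quasiInf_eq (x y : G) : quasiInf s x y = x + y - s x y := by
  have h : s x y - (x + y) = s (-x) (-y) := by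
    rw [hs.sub_right, hs.comm, sub_add_cancel_right, sub_add_cancel_left]
  rw [quasiInf, ← h, neg_sub]

theorem sup_add_quasiInf (x y : G) : s x y + quasiInf s x y = x + y := by
  rw [hs.quasiInf_eq, add_sub_cancel]

theorem quasiInf_quasiPos_quasiNeg (x : G) :
    quasiInf s (quasiPos s x) (quasiNeg s x) = 0 := by
  have h : s (quasiPos s x) (quasiNeg s x) = quasiPos s x + quasiNeg s x :=
    calc s (quasiPos s x) (quasiNeg s x)
      _ = s (x + quasiNeg s x) (0 + quasiNeg s x) := by
        rw [zero_add, hs.quasiNeg_eq_quasiPos_sub, add_sub_cancel]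
      _ = quasiPos s x + quasiNeg s x := by rw [← hs.add_right, hs.comm, quasiPos]
  rw [hs.quasiInf_eq, h, sub_self]

theorem quasiAbs_sub (x y : G) : quasiAbs s (x - y) = 2 • s x y - (x + y) := by
  rw [quasiAbs, ← hs.two_nsmul, hs.sub_right, hs.comm]
  congr 1 <;> abel

theorem quasiAbs_eq_quasiPos_add_quasiNeg (x : G) :
    quasiAbs s x = quasiPos s x + quasiNeg s x :=
  calc quasiAbs s x
    _ = 2 • quasiPos s x - x := by simpa [quasiPos, hs.comm x 0] using hs.quasiAbs_sub x 0
    _ = quasiPos s x + quasiNeg s x := by rw [hs.quasiNeg_eq_quasiPos_sub]; abel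

theorem sup_sub_quasiInf (x y : G) : s x y - quasiInf s x y = quasiAbs s (x - y) := by
  rw [hs.quasiInf_eq, hs.quasiAbs_sub]
  abel

theorem eq_half_smul_add_half_smul_quasiAbs (𝕜 : Type*) [DivisionRing 𝕜] [NeZero (2 : 𝕜)]
    [Module 𝕜 G] (x y : G) :
    s x y = (1 / 2 : 𝕜) • (x + y) + (1 / 2 : 𝕜) • quasiAbs s (x - y) := by
  rw [← smul_add, hs.quasiAbs_sub, add_sub_cancel, ← ofNat_smul_eq_nsmul 𝕜, smul_smul,
    one_div_mul_cancel two_ne_zero, one_smul]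

end IsSupLike

end Algebra

section PairUpperBounds

variable {G : Type*} [AddCommGroup G] {C : Set G} {x y z : G}

/-- The upper bounds of `{x, y}` for the relation `a ≤ b ↔ b - a ∈ C`. -/
def pairUpperBounds (C : Set G) (x y : G) : Set G := {z | z - x ∈ C ∧ z - y ∈ C}

theorem add_right_mem_pairUpperBounds_iff (a : G) :
    z + a ∈ pairUpperBounds C (x + a) (y + a) ↔ z ∈ pairUpperBounds C x y := by
  simp only [pairUpperBounds, Set.mem_ofPred_eq, add_sub_add_right_eq_sub]

theorem smul_mem_pairUpperBounds {M : Type*} [Monoid M] [DistribMulAction M G] {r : M}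
    (hr : ∀ a ∈ C, r • a ∈ C) (hz : z ∈ pairUpperBounds C x y) :
    r • z ∈ pairUpperBounds C (r • x) (r • y) := by
  simp only [pairUpperBounds, Set.mem_ofPred_eq, ← smul_sub]
  exact ⟨hr _ hz.1, hr _ hz.2⟩

end PairUpperBounds

section QuasiSup

variable {X : Type*} [SeminormedAddCommGroup X]

/-- The function `σ_{x,y}(z) = ‖z - x‖ + ‖z - y‖` minimized by quasi-suprema. -/
def normSubSum (x y z : X) : ℝ := ‖z - x‖ + ‖z - y‖

/-- `z` is an upper bound of `{x, y}` at which `σ_{x,y}` is minimal among the upper bounds.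
Uniqueness is left to `IsQuasiSupMap`. -/
def IsQuasiSup (C : Set X) (x y z : X) : Prop :=
  z ∈ pairUpperBounds C x y ∧ ∀ w ∈ pairUpperBounds C x y, normSubSum x y z ≤ normSubSum x y w

/-- `s` is the quasi-supremum operation of an `υ`-quasi-lattice with positive cone `C`. -/
def IsQuasiSupMap (C : Set X) (s : X → X → X) : Prop :=
  ∀ x y, IsQuasiSup C x y (s x y) ∧ ∀ z, IsQuasiSup C x y z → z = s x y

variable {C : Set X} {s : X → X → X} {x y z : X}

theorem normSubSum_add_right (x y z a : X) :
    normSubSum (x + a) (y + a) (z + a) = normSubSum x y z := by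
  simp only [normSubSum, add_sub_add_right_eq_sub]

theorem IsQuasiSup.symm (h : IsQuasiSup C x y z) : IsQuasiSup C y x z := by
  refine ⟨h.1.symm, fun w hw => ?_⟩
  simpa only [normSubSum, add_comm] using h.2 w hw.symm

theorem IsQuasiSup.add_right (h : IsQuasiSup C x y z) (a : X) :
    IsQuasiSup C (x + a) (y + a) (z + a) := by
  refine ⟨(add_right_mem_pairUpperBounds_iff a).2 h.1, fun w hw => ?_⟩
  obtain ⟨v, rfl⟩ : ∃ v, v + a = w := ⟨w - a, sub_add_cancel w a⟩
  simpa only [normSubSum_add_right] using h.2 v ((add_right_mem_pairUpperBounds_iff a).1 hw)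

theorem IsQuasiSupMap.comm (hs : IsQuasiSupMap C s) (x y : X) : s x y = s y x :=
  (hs y x).2 _ (hs x y).1.symm

theorem IsQuasiSupMap.add_right (hs : IsQuasiSupMap C s) (x y z : X) :
    s x y + z = s (x + z) (y + z) :=
  (hs _ _).2 _ ((hs x y).1.add_right z)

variable [NormedSpace ℝ X] {r : ℝ}

theorem normSubSum_smul (hr : 0 ≤ r) (x y z : X) :
    normSubSum (r • x) (r • y) (r • z) = r * normSubSum x y z := by
  simp only [normSubSum, ← smul_sub, norm_smul, Real.norm_of_nonneg hr, mul_add]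

variable (hC : ∀ r : ℝ, 0 < r → ∀ a ∈ C, r • a ∈ C)

include hC

theorem IsQuasiSup.smul (h : IsQuasiSup C x y z) (hr : 0 < r) :
    IsQuasiSup C (r • x) (r • y) (r • z) := by
  refine ⟨smul_mem_pairUpperBounds (hC r hr) h.1, fun w hw => ?_⟩
  have hw' : r⁻¹ • w ∈ pairUpperBounds C x y := by
    simpa only [inv_smul_smul₀ hr.ne'] using
      smul_mem_pairUpperBounds (hC r⁻¹ (inv_pos.2 hr)) hw
  calc normSubSum (r • x) (r • y) (r • z)
    _ = r * normSubSum x y z := normSubSum_smul hr.le x y z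
    _ ≤ r * normSubSum x y (r⁻¹ • w) := mul_le_mul_of_nonneg_left (h.2 _ hw') hr.le
    _ = normSubSum (r • x) (r • y) w := by
      rw [← normSubSum_smul hr.le, smul_inv_smul₀ hr.ne']

theorem IsQuasiSupMap.smul_of_pos (hs : IsQuasiSupMap C s) (hr : 0 < r) (x y : X) :
    s (r • x) (r • y) = r • s x y :=
  ((hs _ _).2 _ ((hs x y).1.smul hC hr)).symm

theorem IsQuasiSupMap.isSupLike (hs : IsQuasiSupMap C s) : IsSupLike s where
  comm := hs.comm
  add_right := hs.add_right
  two_nsmul x y := by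
    simpa only [ofNat_smul_eq_nsmul] using hs.smul_of_pos hC (zero_lt_two' ℝ) x y

theorem IsQuasiSupMap.smul (hs : IsQuasiSupMap C s) (hr : 0 ≤ r) (x y : X) :
    s (r • x) (r • y) = r • s x y := by
  rcases hr.eq_or_lt with rfl | hr
  · simp only [zero_smul, (hs.isSupLike hC).zero_zero]
  · exact hs.smul_of_pos hC hr x y

end QuasiSup

theorem stmt_12_general {X : Type*} [SeminormedAddCommGroup X] [NormedSpace ℝ X]
    (C : Set X) (hC : ∀ r : ℝ, 0 < r → ∀ a ∈ C, r • a ∈ C)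
    (qsup : X → X → X) (hqsup : IsQuasiSupMap C qsup) (x y z : X) (r : ℝ) (hr : 0 ≤ r) :
    qsup x x = x ∧
    qsup (r • x) (r • y) = r • qsup x y ∧
    qsup x y + z = qsup (x + z) (y + z) ∧
    x = quasiPos qsup x - quasiNeg qsup x ∧
    quasiInf qsup (quasiPos qsup x) (quasiNeg qsup x) = 0 ∧
    quasiAbs qsup x = quasiPos qsup x + quasiNeg qsup x ∧
    qsup x y + quasiInf qsup x y = x + y ∧
    qsup x y - quasiInf qsup x y = quasiAbs qsup (x - y) ∧
    qsup x y = (1 / 2 : ℝ) • (x + y) + (1 / 2 : ℝ) • quasiAbs qsup (x - y) :=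
  have hsup : IsSupLike qsup := hqsup.isSupLike hC
  ⟨hsup.self x, hqsup.smul hC hr x y, hqsup.add_right x y z, (hsup.quasiPos_sub_quasiNeg x).symm,
    hsup.quasiInf_quasiPos_quasiNeg x, hsup.quasiAbs_eq_quasiPos_add_quasiNeg x,
    hsup.sup_add_quasiInf x y, hsup.sup_sub_quasiInf x y,
    hsup.eq_half_smul_add_half_smul_quasiAbs ℝ x y⟩

/-- Basic identities in an `υ`-quasi-lattice. The function
`qsup x y` is the quasi-supremum: the unique upper bound of `{x,y}` minimizing
`σ_{x,y}(z) = ‖z - x‖ + ‖z - y‖` over all upper bounds. With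
`x ∧̃ y := -((-x) ∨̃ (-y))`, `x⁺ := 0 ∨̃ x`, `x⁻ := 0 ∨̃ (-x)` and `⌈x⌉ := (-x) ∨̃ x`,
the listed vector lattice identities hold. -/
theorem stmt_12
    {X : Type*} [NormedAddCommGroup X] [NormedSpace ℝ X] [CompleteSpace X]
    (C : Set X) (hC_closed : IsClosed C)
    (hC_add : ∀ a ∈ C, ∀ b ∈ C, a + b ∈ C)
    (hC_smul : ∀ r : ℝ, 0 ≤ r → ∀ a ∈ C, r • a ∈ C)
    (qsup : X → X → X)
    (hqsup : ∀ x y : X,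
      ((qsup x y - x ∈ C ∧ qsup x y - y ∈ C) ∧
        ∀ w : X, (w - x ∈ C ∧ w - y ∈ C) →
          ‖qsup x y - x‖ + ‖qsup x y - y‖ ≤ ‖w - x‖ + ‖w - y‖) ∧
      ∀ z : X, ((z - x ∈ C ∧ z - y ∈ C) ∧
          ∀ w : X, (w - x ∈ C ∧ w - y ∈ C) →
            ‖z - x‖ + ‖z - y‖ ≤ ‖w - x‖ + ‖w - y‖) → z = qsup x y) :
    ∀ x y z : X, ∀ r : ℝ, 0 ≤ r →
      (qsup x x = x) ∧
      (qsup (r • x) (r • y) = r • qsup x y) ∧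
      (qsup x y + z = qsup (x + z) (y + z)) ∧
      (x = qsup 0 x - qsup 0 (-x)) ∧
      (-(qsup (-(qsup 0 x)) (-(qsup 0 (-x)))) = 0) ∧
      (qsup (-x) x = qsup 0 x + qsup 0 (-x)) ∧
      (qsup x y + (-(qsup (-x) (-y))) = x + y) ∧
      (qsup x y - (-(qsup (-x) (-y))) = qsup (-(x - y)) (x - y)) ∧
      (qsup x y = (1 / 2 : ℝ) • (x + y) + (1 / 2 : ℝ) • qsup (-(x - y)) (x - y)) :=
  stmt_12_general C (fun r hr => hC_smul r hr.le) qsup hqsup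
end

section
/- Let X be an υ-quasi-lattice with quasi-absolute value ⌈x⌉ := (−x)∨̃x. Then for all x, y ∈ X: both x + y ≤ ⌈x⌉ + ⌈y⌉ and −(x+y) ≤ ⌈x⌉ + ⌈y⌉ (triangle inequality); and each of x − ⌈y⌉, −x − ⌈y⌉, y − ⌈x⌉, −y − ⌈x⌉ is ≤ ⌈x + y⌉ and also ≤ ⌈x − y⌉ (reverse triangle inequality). -/
/-!
Whenever `±x ≤ a` and `±y ≤ b`, adding inequalities gives `±(x + y) ≤ a + b`. The reverse triangle
inequality is this same fact applied to the decompositions `x = (x ± y) ∓ y` and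
`y = ±((x ± y) - x)`, after moving one of the two bounds to the other side.
-/

/-- `IsAbsBound C a x` says that `a` is an upper bound of `{x, -x}`, for the relation `u ≤ v`
defined by `v - u ∈ C`. It abstracts the property `±x ≤ ⌈x⌉` of the quasi-absolute value.
No order instance is used, since `C` need not contain `0`. -/
def IsAbsBound {X : Type*} [AddCommGroup X] (C : AddSubsemigroup X) (a x : X) : Prop :=
  a - x ∈ C ∧ a - -x ∈ C

namespace IsAbsBound

variable {X : Type*} [AddCommGroup X] {C : AddSubsemigroup X} {a b x y : X}

theorem neg (hx : IsAbsBound C a x) : IsAbsBound C a (-x) :=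
  ⟨hx.2, by simpa only [neg_neg] using hx.1⟩

theorem add (hx : IsAbsBound C a x) (hy : IsAbsBound C b y) :
    IsAbsBound C (a + b) (x + y) := by
  refine ⟨?_, ?_⟩
  · simpa only [add_sub_add_comm] using C.add_mem hx.1 hy.1
  · simpa only [neg_add, add_sub_add_comm] using C.add_mem hx.2 hy.2

theorem sub (hx : IsAbsBound C a x) (hy : IsAbsBound C b y) :
    IsAbsBound C (a + b) (x - y) := by
  simpa only [sub_eq_add_neg] using hx.add hy.neg

theorem sub_sub_mem (hx : IsAbsBound C (a + b) x) :
    a - (x - b) ∈ C ∧ a - (-x - b) ∈ C := by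
  simpa only [IsAbsBound, sub_sub_eq_add_sub] using hx

theorem sub_sub_mem_of_add (hxy : IsAbsBound C a (x + y)) (hy : IsAbsBound C b y) :
    a - (x - b) ∈ C ∧ a - (-x - b) ∈ C := by
  have hx : IsAbsBound C (a + b) x := by simpa only [add_sub_cancel_right] using hxy.sub hy
  exact hx.sub_sub_mem

theorem sub_sub_mem_of_sub (hxy : IsAbsBound C a (x - y)) (hy : IsAbsBound C b y) :
    a - (x - b) ∈ C ∧ a - (-x - b) ∈ C :=
  sub_sub_mem_of_add (by rwa [← sub_eq_add_neg]) hy.neg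

end IsAbsBound

theorem stmt_13_general {X : Type*} [AddCommGroup X] (C : AddSubsemigroup X) (q : X → X)
    (hq : ∀ z, IsAbsBound C (q z) z) (x y : X) :
    ((q x + q y) - (x + y) ∈ C ∧
      (q x + q y) - (-(x + y)) ∈ C) ∧
    (q (x + y) - (x - q y) ∈ C ∧
      q (x + y) - (-x - q y) ∈ C ∧
      q (x + y) - (y - q x) ∈ C ∧
      q (x + y) - (-y - q x) ∈ C) ∧
    (q (x - y) - (x - q y) ∈ C ∧
      q (x - y) - (-x - q y) ∈ C ∧
      q (x - y) - (y - q x) ∈ C ∧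
      q (x - y) - (-y - q x) ∈ C) := by
  have bound_add_comm : IsAbsBound C (q (x + y)) (y + x) := add_comm x y ▸ hq (x + y)
  have bound_sub_comm : IsAbsBound C (q (x - y)) (y - x) := neg_sub x y ▸ (hq (x - y)).neg
  obtain ⟨x_add, neg_x_add⟩ := (hq (x + y)).sub_sub_mem_of_add (hq y)
  obtain ⟨x_sub, neg_x_sub⟩ := (hq (x - y)).sub_sub_mem_of_sub (hq y)
  exact ⟨(hq x).add (hq y),
    ⟨x_add, neg_x_add, bound_add_comm.sub_sub_mem_of_add (hq x)⟩,
    ⟨x_sub, neg_x_sub, bound_sub_comm.sub_sub_mem_of_sub (hq x)⟩⟩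

/-- Triangle and reverse triangle inequality in an `υ`-quasi-lattice,
where `⌈x⌉ := qsup (-x) x` is the quasi-absolute value and `a ≤ b` means `b - a ∈ C`. -/
theorem stmt_13
    {X : Type*} [NormedAddCommGroup X] [NormedSpace ℝ X] [CompleteSpace X]
    (C : Set X) (hC_closed : IsClosed C)
    (hC_add : ∀ a ∈ C, ∀ b ∈ C, a + b ∈ C)
    (hC_smul : ∀ r : ℝ, 0 ≤ r → ∀ a ∈ C, r • a ∈ C)
    (qsup : X → X → X)
    (hqsup : ∀ x y : X,
      ((qsup x y - x ∈ C ∧ qsup x y - y ∈ C) ∧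
        ∀ w : X, (w - x ∈ C ∧ w - y ∈ C) →
          ‖qsup x y - x‖ + ‖qsup x y - y‖ ≤ ‖w - x‖ + ‖w - y‖) ∧
      ∀ z : X, ((z - x ∈ C ∧ z - y ∈ C) ∧
          ∀ w : X, (w - x ∈ C ∧ w - y ∈ C) →
            ‖z - x‖ + ‖z - y‖ ≤ ‖w - x‖ + ‖w - y‖) → z = qsup x y) :
    ∀ x y : X,
      -- triangle inequality: ±(x+y) ≤ ⌈x⌉ + ⌈y⌉
      ((qsup (-x) x + qsup (-y) y) - (x + y) ∈ C ∧
       (qsup (-x) x + qsup (-y) y) - (-(x + y)) ∈ C) ∧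
      -- reverse triangle inequality: each of x−⌈y⌉, −x−⌈y⌉, y−⌈x⌉, −y−⌈x⌉ is ≤ ⌈x+y⌉
      (qsup (-(x + y)) (x + y) - (x - qsup (-y) y) ∈ C ∧
       qsup (-(x + y)) (x + y) - (-x - qsup (-y) y) ∈ C ∧
       qsup (-(x + y)) (x + y) - (y - qsup (-x) x) ∈ C ∧
       qsup (-(x + y)) (x + y) - (-y - qsup (-x) x) ∈ C) ∧
      -- and each is ≤ ⌈x−y⌉
      (qsup (-(x - y)) (x - y) - (x - qsup (-y) y) ∈ C ∧
       qsup (-(x - y)) (x - y) - (-x - qsup (-y) y) ∈ C ∧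
       qsup (-(x - y)) (x - y) - (y - qsup (-x) x) ∈ C ∧
       qsup (-(x - y)) (x - y) - (-y - qsup (-x) x) ∈ C) :=
  stmt_13_general ⟨C, fun ha hb => hC_add _ ha _ hb⟩ (fun z => qsup (-z) z)
    fun z => (hqsup (-z) z).1.1.symm
end

section
/- Every strictly convex reflexive ordered Banach space X with a closed proper generating cone is an υ-quasi-lattice: for every x, y ∈ X the set of upper bounds υ({x,y}) is nonempty and contains a unique element minimizing σ_{x,y}(z) = ‖z − x‖ + ‖z − y‖ on υ({x,y}). -/
/-!
Existence of a minimizer is the direct method: in a reflexive space, bounded sublevel sets of a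
convex continuous function on a closed convex set are weakly compact, by Mazur and Banach–Alaoglu.

For uniqueness, the midpoint of two minimizers `z₁`, `z₂` is an upper bound of `{x, y}` as well,
which forces equality in the triangle inequalities for `(z₁ - x) + (z₂ - x)` and
`(z₁ - y) + (z₂ - y)`. By strict convexity the two vectors of each pair lie on a common ray of the
cone, so they are ordered as their norms are. Both minimizers have the same distance sum, so if
`z₁` is the closer one to `x`, then `z₂` is the closer one to `y`. Hence `z₁ ≤ z₂` and `z₂ ≤ z₁`.
-/

theorem isClosed_sep_le_of_lowerSemicontinuousOn {α β : Type*} [TopologicalSpace α]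
    [LinearOrder β] {s : Set α} {f : α → β} (hs : IsClosed s) (hf : LowerSemicontinuousOn f s)
    (r : β) : IsClosed {w ∈ s | f w ≤ r} := by
  obtain ⟨v, hv, hsv⟩ := lowerSemicontinuousOn_iff_preimage_Iic.mp hf r
  exact (hsv ▸ hs.inter hv : IsClosed (s ∩ f ⁻¹' Set.Iic r))

section WeakTopology

variable {𝕜 E : Type*} [RCLike 𝕜] [AddCommGroup E] [Module 𝕜 E] [Module ℝ E]
  [IsScalarTower ℝ 𝕜 E] [TopologicalSpace E] [IsTopologicalAddGroup E] [ContinuousSMul 𝕜 E]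
  [LocallyConvexSpace ℝ E]

theorem isClosed_image_toWeakSpace {s : Set E} (hs : Convex ℝ s) (hsc : IsClosed s) :
    IsClosed (toWeakSpace 𝕜 E '' s) :=
  closure_eq_iff_isClosed.mp <| by rw [← hs.toWeakSpace_closure 𝕜, hsc.closure_eq]

theorem lowerSemicontinuousOn_image_toWeakSpace {β : Type*} [LinearOrder β] {s : Set E} {f : E → β}
    (hsc : IsClosed s) (hf : QuasiconvexOn ℝ s f) (hfc : LowerSemicontinuousOn f s) :
    LowerSemicontinuousOn (f ∘ (toWeakSpace 𝕜 E).symm) (toWeakSpace 𝕜 E '' s) := by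
  refine lowerSemicontinuousOn_iff_preimage_Iic.mpr fun r =>
    ⟨toWeakSpace 𝕜 E '' {w ∈ s | f w ≤ r}, isClosed_image_toWeakSpace (hf r)
      (isClosed_sep_le_of_lowerSemicontinuousOn hsc hfc r), ?_⟩
  ext w
  simp [LinearEquiv.image_eq_preimage_symm]

end WeakTopology

section Reflexive

variable {𝕜 E : Type*} [RCLike 𝕜] [NormedAddCommGroup E] [NormedSpace 𝕜 E]

theorem isCompact_of_isClosed_of_isBounded_preimage_toWeakSpace
    (hrefl : Function.Surjective (NormedSpace.inclusionInDoubleDual 𝕜 E))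
    {S : Set (WeakSpace 𝕜 E)} (hS : IsClosed S)
    (hb : Bornology.IsBounded (toWeakSpace 𝕜 E ⁻¹' S)) : IsCompact S := by
  have hsurj : Function.Surjective (NormedSpace.inclusionInDoubleDualWeak 𝕜 E) := fun φ => by
    obtain ⟨x, hx⟩ := hrefl (WeakDual.toStrongDual φ)
    exact ⟨toWeakSpace 𝕜 E x, by simp [NormedSpace.inclusionInDoubleDualWeak_apply, hx]⟩
  rw [← hS.closure_eq]
  exact NormedSpace.isCompact_closure_of_isBounded 𝕜 E S hb fun φ _ => hsurj φ

theorem exists_isMinOn_of_quasiconvexOn_of_isBounded_sublevel [NormedSpace ℝ E]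
    [IsScalarTower ℝ 𝕜 E]
    (hrefl : Function.Surjective (NormedSpace.inclusionInDoubleDual 𝕜 E))
    {β : Type*} [LinearOrder β] {s : Set E} {f : E → β} (hsc : IsClosed s)
    (hf : QuasiconvexOn ℝ s f) (hfc : LowerSemicontinuousOn f s) {w₀ : E} (hw₀ : w₀ ∈ s)
    (hb : Bornology.IsBounded {w ∈ s | f w ≤ f w₀}) :
    ∃ z ∈ s, IsMinOn f s z := by
  set K := {w ∈ s | f w ≤ f w₀}
  have hKs : K ⊆ s := Set.sep_subset _ _
  have hK_ne : K.Nonempty := ⟨w₀, hw₀, le_rfl⟩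
  have hK_closed : IsClosed K := isClosed_sep_le_of_lowerSemicontinuousOn hsc hfc (f w₀)
  have hK_compact : IsCompact (toWeakSpace 𝕜 E '' K) :=
    isCompact_of_isClosed_of_isBounded_preimage_toWeakSpace hrefl
      (isClosed_image_toWeakSpace (hf (f w₀)) hK_closed)
      (by rwa [Set.preimage_image_eq _ (toWeakSpace 𝕜 E).injective])
  have hf_lsc : LowerSemicontinuousOn (f ∘ (toWeakSpace 𝕜 E).symm) (toWeakSpace 𝕜 E '' K) :=
    (lowerSemicontinuousOn_image_toWeakSpace hsc hf hfc).mono (Set.image_mono hKs)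
  obtain ⟨_, ⟨z, hz, rfl⟩, hmin⟩ := hf_lsc.exists_isMinOn (.image _ hK_ne) hK_compact
  have hmin_K : IsMinOn f K z := fun w hw => by simpa using hmin (Set.mem_image_of_mem _ hw)
  refine ⟨z, hKs hz, fun w hw => ?_⟩
  rcases le_total (f w) (f w₀) with hle | hle
  · exact hmin_K ⟨hw, hle⟩
  · exact hz.2.trans hle

end Reflexive

/-- The sum `σ_{x,y}` of the distances to `x` and `y`, whose minimizer on the upper bounds of
`{x, y}` plays the role of the supremum in a `υ`-quasi-lattice. -/
noncomputable def distSum {X : Type*} [Dist X] (x y w : X) : ℝ :=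
  dist w x + dist w y

theorem isBounded_setOf_distSum_le {X : Type*} [PseudoMetricSpace X] (x y : X) (r : ℝ) :
    Bornology.IsBounded {w | distSum x y w ≤ r} :=
  Metric.isBounded_closedBall.subset fun _ hw =>
    Metric.mem_closedBall.mpr ((le_add_of_nonneg_right dist_nonneg).trans hw)

theorem exists_isMinOn_distSum {𝕜 E : Type*} [RCLike 𝕜] [NormedAddCommGroup E] [NormedSpace 𝕜 E]
    [NormedSpace ℝ E] [IsScalarTower ℝ 𝕜 E]
    (hrefl : Function.Surjective (NormedSpace.inclusionInDoubleDual 𝕜 E)) {s : Set E}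
    (hs : Convex ℝ s) (hsc : IsClosed s) (hne : s.Nonempty) (x y : E) :
    ∃ z ∈ s, IsMinOn (distSum x y) s z := by
  obtain ⟨w₀, hw₀⟩ := hne
  have hconv : ConvexOn ℝ s (distSum x y) := (convexOn_dist x hs).add (convexOn_dist y hs)
  have hcont : Continuous (distSum x y) := by unfold distSum; fun_prop
  exact exists_isMinOn_of_quasiconvexOn_of_isBounded_sublevel hrefl hsc hconv.quasiconvexOn
    (hcont.lowerSemicontinuous.lowerSemicontinuousOn s) hw₀
    ((isBounded_setOf_distSum_le x y _).subset fun _ hw => hw.2)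

section StrictConvexity

variable {X : Type*} [NormedAddCommGroup X] [NormedSpace ℝ X]

theorem strictConvexSpace_of_norm_add_imp_smul
    (h : ∀ x y : X, ‖x + y‖ = ‖x‖ + ‖y‖ →
      (∃ r : ℝ, 0 ≤ r ∧ y = r • x) ∨ (∃ r : ℝ, 0 ≤ r ∧ x = r • y)) :
    StrictConvexSpace ℝ X := by
  refine StrictConvexSpace.of_norm_add fun x y hx hy hxy => ?_
  rcases h x y (by rw [hxy, hx, hy]; norm_num) with ⟨r, hr, rfl⟩ | ⟨r, hr, rfl⟩
  · exact SameRay.sameRay_nonneg_smul_right x hr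
  · exact SameRay.sameRay_nonneg_smul_left y hr

theorem sameRay_sub_of_isMinOn_dist_add [StrictConvexSpace ℝ X] {s : Set X} {g : X → ℝ}
    (hg : ConvexOn ℝ s g) {x z₁ z₂ : X} (hz₁ : z₁ ∈ s) (hz₂ : z₂ ∈ s)
    (hmin₁ : IsMinOn (fun w => dist w x + g w) s z₁)
    (hmin₂ : IsMinOn (fun w => dist w x + g w) s z₂) :
    SameRay ℝ (z₁ - x) (z₂ - x) := by
  set m := (1 / 2 : ℝ) • z₁ + (1 / 2 : ℝ) • z₂ with hm
  have hms : m ∈ s := hg.1 hz₁ hz₂ (by norm_num) (by norm_num) (by norm_num)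
  have hgm : g m ≤ (1 / 2) * g z₁ + (1 / 2) * g z₂ :=
    hg.2 hz₁ hz₂ (by norm_num) (by norm_num) (by norm_num)
  have hdist : dist m x = (1 / 2) * ‖(z₁ - x) + (z₂ - x)‖ := by
    rw [dist_eq_norm, show m - x = (1 / 2 : ℝ) • ((z₁ - x) + (z₂ - x)) by rw [hm]; module,
      norm_smul_of_nonneg (by norm_num)]
  have hm₁ : ‖z₁ - x‖ + g z₁ ≤ dist m x + g m := dist_eq_norm z₁ x ▸ hmin₁ hms
  have hm₂ : ‖z₂ - x‖ + g z₂ ≤ dist m x + g m := dist_eq_norm z₂ x ▸ hmin₂ hms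
  exact sameRay_iff_norm_add.mpr (le_antisymm (norm_add_le _ _) (by linarith))

end StrictConvexity

section OrderedNormedSpace

variable {X : Type*} [NormedAddCommGroup X] [NormedSpace ℝ X] [PartialOrder X]
  [IsOrderedAddMonoid X] [PosSMulMono ℝ X]

theorem le_of_sameRay_of_norm_le {u v : X} (h : SameRay ℝ u v) (hv : 0 ≤ v) (hle : ‖u‖ ≤ ‖v‖) :
    u ≤ v := by
  rcases eq_or_ne v 0 with rfl | hv_ne
  · exact (norm_le_zero_iff.mp (by simpa only [norm_zero] using hle)).le
  · refine le_of_smul_le_smul_of_pos_left ?_ (norm_pos_iff.mpr hv_ne)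
    calc ‖v‖ • u = ‖u‖ • v := h.norm_smul_eq.symm
      _ ≤ ‖v‖ • v := smul_le_smul_of_nonneg_right hle hv

theorem eq_of_isMinOn_distSum [StrictConvexSpace ℝ X] {s : Set X} (hs : Convex ℝ s) {x y : X}
    (hub : s ⊆ upperBounds {x, y}) {z₁ z₂ : X} (hz₁ : z₁ ∈ s) (hz₂ : z₂ ∈ s)
    (hmin₁ : IsMinOn (distSum x y) s z₁) (hmin₂ : IsMinOn (distSum x y) s z₂) : z₁ = z₂ := by
  wlog hle : ‖z₁ - x‖ ≤ ‖z₂ - x‖ generalizing z₁ z₂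
  · exact (this hz₂ hz₁ hmin₂ hmin₁ (le_of_not_ge hle)).symm
  have hray_x : SameRay ℝ (z₁ - x) (z₂ - x) :=
    sameRay_sub_of_isMinOn_dist_add (convexOn_dist y hs) hz₁ hz₂ hmin₁ hmin₂
  have hray_y : SameRay ℝ (z₂ - y) (z₁ - y) := by
    have hcomm : distSum x y = fun w => dist w y + dist w x := funext fun w => add_comm _ _
    rw [hcomm] at hmin₁ hmin₂
    exact sameRay_sub_of_isMinOn_dist_add (convexOn_dist x hs) hz₂ hz₁ hmin₂ hmin₁
  have hle_y : ‖z₂ - y‖ ≤ ‖z₁ - y‖ := by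
    have hmin : distSum x y z₂ ≤ distSum x y z₁ := hmin₂ hz₁
    simp only [distSum, dist_eq_norm] at hmin
    linarith
  have hx : x ≤ z₂ := hub hz₂ (by simp)
  have hy : y ≤ z₁ := hub hz₁ (by simp)
  exact le_antisymm
    ((sub_le_sub_iff_right x).mp (le_of_sameRay_of_norm_le hray_x (sub_nonneg.mpr hx) hle))
    ((sub_le_sub_iff_right y).mp (le_of_sameRay_of_norm_le hray_y (sub_nonneg.mpr hy) hle_y))

theorem existsUnique_isMinOn_distSum_upperBounds [StrictConvexSpace ℝ X] [ClosedIciTopology X]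
    [IsDirectedOrder X]
    (hrefl : Function.Surjective (NormedSpace.inclusionInDoubleDual ℝ X)) (x y : X) :
    ∃! z, z ∈ upperBounds {x, y} ∧ IsMinOn (distSum x y) (upperBounds {x, y}) z := by
  have hne : (upperBounds {x, y}).Nonempty := BddAbove.insert x bddAbove_singleton
  have hIci : upperBounds {x, y} = Set.Ici x ∩ Set.Ici y := by
    rw [upperBounds_insert, upperBounds_singleton]
  have hconv : Convex ℝ (upperBounds {x, y}) := hIci ▸ (convex_Ici x).inter (convex_Ici y)
  have hclosed : IsClosed (upperBounds {x, y}) := hIci ▸ isClosed_Ici.inter isClosed_Ici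
  obtain ⟨z, hz, hmin⟩ := exists_isMinOn_distSum hrefl hconv hclosed hne x y
  exact ⟨z, ⟨hz, hmin⟩, fun w ⟨hw, hw_min⟩ =>
    eq_of_isMinOn_distSum hconv subset_rfl hw hz hw_min hmin⟩

end OrderedNormedSpace

theorem isDirectedOrder_of_forall_eq_sub {G : Type*} [AddCommGroup G] [Preorder G]
    [IsOrderedAddMonoid G] (h : ∀ x : G, ∃ a, 0 ≤ a ∧ ∃ b, 0 ≤ b ∧ x = a - b) :
    IsDirectedOrder G where
  directed x y := by
    obtain ⟨a, ha, b, hb, rfl⟩ := h x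
    obtain ⟨c, hc, d, hd, rfl⟩ := h y
    exact ⟨a + c, (sub_le_self a hb).trans (le_add_of_nonneg_right hc),
      (sub_le_self c hd).trans (le_add_of_nonneg_left ha)⟩

theorem closedIciTopology_of_isClosed_Ici_zero {G : Type*} [AddCommGroup G] [Preorder G]
    [IsOrderedAddMonoid G] [TopologicalSpace G] [ContinuousSub G]
    (h : IsClosed (Set.Ici (0 : G))) : ClosedIciTopology G where
  isClosed_Ici a := by
    have hpre : Set.Ici a = (· - a) ⁻¹' Set.Ici 0 := by ext; simp
    exact hpre ▸ h.preimage (by fun_prop)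

/-- Every strictly convex reflexive ordered Banach space with a closed
proper generating cone is an `υ`-quasi-lattice. Reflexivity is expressed as surjectivity
of the canonical inclusion into the double dual, and strict convexity as: whenever
`‖x + y‖ = ‖x‖ + ‖y‖`, one of `x`, `y` is a nonnegative multiple of the other. -/
theorem stmt_15
    {X : Type*} [NormedAddCommGroup X] [NormedSpace ℝ X] [CompleteSpace X]
    (hrefl : Function.Surjective (NormedSpace.inclusionInDoubleDual ℝ X))
    (hsc : ∀ x y : X, ‖x + y‖ = ‖x‖ + ‖y‖ →
      (∃ r : ℝ, 0 ≤ r ∧ y = r • x) ∨ (∃ r : ℝ, 0 ≤ r ∧ x = r • y))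
    (C : Set X) (hC_closed : IsClosed C)
    (hC_add : ∀ a ∈ C, ∀ b ∈ C, a + b ∈ C)
    (hC_smul : ∀ r : ℝ, 0 ≤ r → ∀ a ∈ C, r • a ∈ C)
    (hC_proper : C ∩ (-C) = {0})
    (hC_gen : ∀ x : X, ∃ a ∈ C, ∃ b ∈ C, x = a - b) :
    ∀ x y : X, ∃! z : X,
      (z - x ∈ C ∧ z - y ∈ C) ∧
      ∀ w : X, (w - x ∈ C ∧ w - y ∈ C) →
        ‖z - x‖ + ‖z - y‖ ≤ ‖w - x‖ + ‖w - y‖ := by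
  let K : AddGroupCone X :=
    { carrier := C
      zero_mem' := (hC_proper.symm.subset rfl).1
      add_mem' := fun ha hb => hC_add _ ha _ hb
      eq_zero_of_mem_of_neg_mem' := fun ha hna => hC_proper.subset ⟨ha, hna⟩ }
  let _ : PartialOrder X := .mkOfAddGroupCone K
  have : IsOrderedAddMonoid X := .mkOfCone K
  have hle (a b : X) : a ≤ b ↔ b - a ∈ C := Iff.rfl
  have hnonneg (a : X) : 0 ≤ a ↔ a ∈ C := by rw [hle, sub_zero]
  have : PosSMulMono ℝ X := .of_smul_nonneg (by simpa only [hnonneg] using hC_smul)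
  have : ClosedIciTopology X := closedIciTopology_of_isClosed_Ici_zero <| by
    rwa [show Set.Ici (0 : X) = C from Set.ext hnonneg]
  have : IsDirectedOrder X :=
    isDirectedOrder_of_forall_eq_sub (by simpa only [hnonneg] using hC_gen)
  have : StrictConvexSpace ℝ X := strictConvexSpace_of_norm_add_imp_smul hsc
  intro x y
  simpa only [isMinOn_iff, distSum, dist_eq_norm, upperBounds_insert, upperBounds_singleton,
    Set.mem_inter_iff, Set.mem_Ici, hle] using existsUnique_isMinOn_distSum_upperBounds hrefl x y
end

section
/- Let H be a real Hilbert space with dim(H) ≥ 3, ordered by a Lorentz cone L_v for a norm-one element v ∈ H. Then H is not a Riesz space: there exist x, y ∈ H that have no supremum, i.e. no upper bound z of {x, y} such that z ≤ w for every upper bound w of {x, y}. In fact, for any orthonormal set {v, e₁, e₂} ⊆ H, the pair {0, 2e₁} has no supremum. -/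
/-!
Two vectors with the same `v`-component may be translated to `±e` with `e ⊥ v`. Then `‖e‖ v` is a
minimal upper bound of `{-e, e}`, hence equal to the supremum if there is one: if `p + t v` with
`p ⊥ v` is an upper bound, then `2‖e‖ ≤ ‖p + e‖ + ‖p - e‖ ≤ 2t`, so `p + t v ≤ ‖e‖ v` forces
`t = ‖e‖` and `p = 0`. But as `dim H ≥ 3` there is some `f ≠ 0` orthogonal to `v` and `e`, and then
`f + ‖e + f‖ v` is another upper bound, not above `‖e‖ v` because `‖e + f‖ < ‖e‖ + ‖f‖`.
-/

open scoped RealInnerProductSpace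

/-- The Lorentz cone in a real Hilbert space determined by a norm-one vector `v`:
`{x | ⟨v, x⟩ ≥ ‖Px‖}`, where `Px = x - ⟨v, x⟩ v` is the orthogonal projection of `x`
onto the orthogonal complement of `v` (for `‖v‖ = 1`). -/
def lorentzCone {H : Type*} [NormedAddCommGroup H] [InnerProductSpace ℝ H] (v : H) :
    Set H :=
  {x | ‖x - ⟪v, x⟫ • v‖ ≤ ⟪v, x⟫}

/-- `z` is a least upper bound of `{x, y}` for the order `a ≤ b ↔ b - a ∈ C`. It is stated for an
arbitrary set `C`, so that the cone need not be turned into an order instance. -/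
def IsConeSup {E : Type*} [AddGroup E] (C : Set E) (x y z : E) : Prop :=
  (z - x ∈ C ∧ z - y ∈ C) ∧ ∀ w : E, (w - x ∈ C ∧ w - y ∈ C) → w - z ∈ C

theorem IsConeSup.sub_right {E : Type*} [AddGroup E] {C : Set E} {x y z : E}
    (hz : IsConeSup C x y z) (c : E) : IsConeSup C (x - c) (y - c) (z - c) := by
  refine ⟨by simpa only [sub_sub_sub_cancel_right] using hz.1, fun w hw => ?_⟩
  simp only [sub_sub_eq_add_sub] at hw ⊢
  exact hz.2 (w + c) hw

theorem exists_ne_zero_forall_inner_eq_zero_of_card_lt_rank {𝕜 E : Type*} [RCLike 𝕜]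
    [NormedAddCommGroup E] [InnerProductSpace 𝕜 E] (s : Finset E)
    (hs : (s.card : Cardinal) < Module.rank 𝕜 E) :
    ∃ e : E, e ≠ 0 ∧ ∀ x ∈ s, inner 𝕜 x e = 0 := by
  have span_ne_top : Submodule.span 𝕜 (s : Set E) ≠ ⊤ := fun h =>
    hs.not_ge (by rw [← rank_top 𝕜 E, ← h]; exact rank_span_finset_le s)
  obtain ⟨e, he, he0⟩ := Submodule.exists_mem_ne_zero_of_ne_bot
    (mt Submodule.orthogonal_eq_bot_iff.mp span_ne_top)
  exact ⟨e, he0, fun x hx => he x (Submodule.subset_span hx)⟩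

section InnerProductSpace

variable {H : Type*} [NormedAddCommGroup H] [InnerProductSpace ℝ H] {v e f p z : H}

theorem exists_inner_eq_zero_and_eq_add_smul (v x : H) :
    ∃ (p : H) (t : ℝ), ⟪v, p⟫ = 0 ∧ x = p + t • v := by
  obtain ⟨q, hq, p, hp, rfl⟩ := (ℝ ∙ v).exists_add_mem_mem_orthogonal x
  obtain ⟨t, rfl⟩ := Submodule.mem_span_singleton.mp hq
  exact ⟨p, t, Submodule.mem_orthogonal_singleton_iff_inner_right.mp hp, add_comm _ _⟩

theorem norm_add_lt_of_inner_eq_zero (he : e ≠ 0) (hf : f ≠ 0) (hef : ⟪e, f⟫ = 0) :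
    ‖e + f‖ < ‖e‖ + ‖f‖ := by
  have pythagoras := norm_add_sq_eq_norm_sq_add_norm_sq_real hef
  have he_pos := norm_pos_iff.mpr he
  have hf_pos := norm_pos_iff.mpr hf
  nlinarith [mul_pos he_pos hf_pos]

theorem add_smul_mem_lorentzCone_iff (hv : ‖v‖ = 1) (hp : ⟪v, p⟫ = 0) (t : ℝ) :
    p + t • v ∈ lorentzCone v ↔ ‖p‖ ≤ t := by
  have inner_eq : ⟪v, p + t • v⟫ = t := by
    simp [inner_add_right, inner_smul_right, hp, hv]
  simp only [lorentzCone, Set.mem_ofPred_eq, inner_eq, add_sub_cancel_right]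

theorem add_smul_upperBound_neg_self_iff (hv : ‖v‖ = 1) (he : ⟪v, e⟫ = 0)
    (hp : ⟪v, p⟫ = 0) (t : ℝ) :
    (p + t • v - -e ∈ lorentzCone v ∧ p + t • v - e ∈ lorentzCone v) ↔
      ‖p + e‖ ≤ t ∧ ‖p - e‖ ≤ t := by
  rw [sub_neg_eq_add, add_right_comm, add_sub_right_comm,
    add_smul_mem_lorentzCone_iff hv (by rw [inner_add_right, hp, he, add_zero]),
    add_smul_mem_lorentzCone_iff hv (by rw [inner_sub_right, hp, he, sub_zero])]

theorem IsConeSup.eq_norm_smul (hv : ‖v‖ = 1) (he : ⟪v, e⟫ = 0)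
    (hz : IsConeSup (lorentzCone v) (-e) e z) : z = ‖e‖ • v := by
  obtain ⟨p, t, hp, rfl⟩ := exists_inner_eq_zero_and_eq_add_smul v z
  obtain ⟨h_neg, h_pos⟩ := (add_smul_upperBound_neg_self_iff hv he hp t).mp hz.1
  have norm_le_sub : ‖p‖ ≤ ‖e‖ - t := by
    have h := hz.2 (0 + ‖e‖ • v) <|
      (add_smul_upperBound_neg_self_iff hv he (inner_zero_right v) _).mpr (by simp)
    rwa [add_sub_add_comm, ← sub_smul, zero_sub,
      add_smul_mem_lorentzCone_iff hv (by rw [inner_neg_right, hp, neg_zero]), norm_neg] at h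
  have two_norm_le : 2 * ‖e‖ ≤ ‖p + e‖ + ‖p - e‖ :=
    calc 2 * ‖e‖ = ‖(p + e) - (p - e)‖ := by
          rw [add_sub_sub_cancel, ← two_smul ℝ e, norm_smul, Real.norm_two]
      _ ≤ ‖p + e‖ + ‖p - e‖ := norm_sub_le _ _
  have ht : t = ‖e‖ := by linarith [norm_nonneg p]
  have hp_zero : p = 0 := norm_le_zero_iff.mp (by linarith)
  rw [hp_zero, ht, zero_add]

theorem not_exists_isConeSup_neg_self (hv : ‖v‖ = 1) (he : e ≠ 0) (hf : f ≠ 0)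
    (hve : ⟪v, e⟫ = 0) (hvf : ⟪v, f⟫ = 0) (hef : ⟪e, f⟫ = 0) :
    ¬ ∃ z, IsConeSup (lorentzCone v) (-e) e z := by
  rintro ⟨z, hz⟩
  obtain rfl := hz.eq_norm_smul hv hve
  have above_sup : f + ‖f + e‖ • v - ‖e‖ • v ∈ lorentzCone v := hz.2 _ <|
    (add_smul_upperBound_neg_self_iff hv hve hvf _).mpr
      ⟨le_rfl, (norm_sub_eq_norm_add hef).le⟩
  rw [add_sub_assoc, ← sub_smul, add_smul_mem_lorentzCone_iff hv hvf, add_comm f e]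
    at above_sup
  linarith [norm_add_lt_of_inner_eq_zero he hf hef]

theorem not_exists_isConeSup_of_inner_eq (hdim : 3 ≤ Module.rank ℝ H) (hv : ‖v‖ = 1) {x y : H}
    (hxy : x ≠ y) (hinner : ⟪v, x⟫ = ⟪v, y⟫) :
    ¬ ∃ z, IsConeSup (lorentzCone v) x y z := by
  classical
  rintro ⟨z, hz⟩
  set e : H := y - midpoint ℝ x y with he
  have left_eq : x - midpoint ℝ x y = -e := by
    rw [he, left_sub_midpoint, right_sub_midpoint, ← smul_neg, neg_sub]
  have he_ne : e ≠ 0 := sub_ne_zero.mpr fun h => hxy ((midpoint_eq_right_iff ℝ).mp h.symm)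
  have hve : ⟪v, e⟫ = 0 := by
    rw [he, right_sub_midpoint, inner_smul_right, inner_sub_right, hinner, sub_self, mul_zero]
  have card_lt : ((({v, e} : Finset H).card : ℕ) : Cardinal) < Module.rank ℝ H :=
    lt_of_lt_of_le (by exact_mod_cast Finset.card_le_two.trans_lt (Nat.lt_succ_self 2)) hdim
  obtain ⟨f, hf_ne, hf⟩ := exists_ne_zero_forall_inner_eq_zero_of_card_lt_rank {v, e} card_lt
  have centred := hz.sub_right (midpoint ℝ x y)
  rw [left_eq, ← he] at centred
  exact not_exists_isConeSup_neg_self hv he_ne hf_ne hve (hf v (by simp)) (hf e (by simp))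
    ⟨_, centred⟩

theorem stmt_17_general (hdim : 3 ≤ Module.rank ℝ H) (hv : ‖v‖ = 1) :
    (∃ x y : H, ¬ ∃ z, IsConeSup (lorentzCone v) x y z) ∧
      ∀ x y : H, x ≠ y → ⟪v, x⟫ = ⟪v, y⟫ → ¬ ∃ z, IsConeSup (lorentzCone v) x y z := by
  refine ⟨?_, fun _ _ hxy => not_exists_isConeSup_of_inner_eq hdim hv hxy⟩
  have card_lt : ((({v} : Finset H).card : ℕ) : Cardinal) < Module.rank ℝ H :=
    lt_of_lt_of_le (by rw [Finset.card_singleton]; norm_num) hdim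
  obtain ⟨e, he_ne, he⟩ := exists_ne_zero_forall_inner_eq_zero_of_card_lt_rank {v} card_lt
  have inner_eq : ⟪v, 0⟫ = ⟪v, e⟫ := by
    rw [inner_zero_right, he v (Finset.mem_singleton_self v)]
  exact ⟨0, e, not_exists_isConeSup_of_inner_eq hdim hv he_ne.symm inner_eq⟩

end InnerProductSpace

/-- A real Hilbert space of dimension at least 3, ordered by a Lorentz cone,
is not a Riesz space: some pair has no supremum; in fact for any orthonormal set
`{v, e₁, e₂}` the pair `{0, 2e₁}` has no supremum. Here `x ≤ y` means
`y - x ∈ lorentzCone v`. -/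
theorem stmt_17
    {H : Type*} [NormedAddCommGroup H] [InnerProductSpace ℝ H] [CompleteSpace H]
    (hdim : 3 ≤ Module.rank ℝ H)
    (v : H) (hv : ‖v‖ = 1) :
    (∃ x y : H, ¬ ∃ z : H,
      (z - x ∈ lorentzCone v ∧ z - y ∈ lorentzCone v) ∧
      ∀ w : H, (w - x ∈ lorentzCone v ∧ w - y ∈ lorentzCone v) →
        w - z ∈ lorentzCone v)
    ∧ ∀ e₁ e₂ : H, ‖e₁‖ = 1 → ‖e₂‖ = 1 →
        ⟪v, e₁⟫ = 0 → ⟪v, e₂⟫ = 0 → ⟪e₁, e₂⟫ = 0 →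
        ¬ ∃ z : H,
          (z - 0 ∈ lorentzCone v ∧ z - (2 : ℝ) • e₁ ∈ lorentzCone v) ∧
          ∀ w : H, (w - 0 ∈ lorentzCone v ∧ w - (2 : ℝ) • e₁ ∈ lorentzCone v) →
            w - z ∈ lorentzCone v := by
  exact (stmt_17_general hdim hv).imp_right fun no_sup e₁ _ h₁ _ hv₁ _ _ =>
    no_sup 0 _ (smul_ne_zero two_ne_zero (norm_ne_zero_iff.mp (by simp [h₁]))).symm
      (by simp [inner_smul_right, hv₁])
end

section
/- A real Hilbert space endowed with a Lorentz cone is absolutely monotone: if H is a real Hilbert space ordered by the Lorentz cone L_v for a norm-one element v ∈ H, then for all x, y ∈ H, x ≤ y and −x ≤ y together imply ‖x‖ ≤ ‖y‖. -/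
/-!
Two elements `a`, `b` of the Lorentz cone have a nonnegative inner product; for `a = y - x` and
`b = y + x` this inner product is `‖y‖ ^ 2 - ‖x‖ ^ 2`. Indeed, with `P a = a - ⟪v, a⟫ • v`,
`⟪a, b⟫ = ⟪P a, P b⟫ + (2 - ‖v‖ ^ 2) * (⟪v, a⟫ * ⟪v, b⟫)`, and Cauchy–Schwarz bounds `⟪P a, P b⟫`
below by `-(⟪v, a⟫ * ⟪v, b⟫)`. What remains is `(1 - ‖v‖ ^ 2) * (⟪v, a⟫ * ⟪v, b⟫)`, which is
nonnegative for `‖v‖ ≤ 1`.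
-/

open scoped RealInnerProductSpace

section InnerProductSpace

variable {E : Type*} [SeminormedAddCommGroup E] [InnerProductSpace ℝ E]

theorem inner_sub_add_nonneg_iff (x y : E) : 0 ≤ ⟪y - x, y + x⟫ ↔ ‖x‖ ≤ ‖y‖ := by
  have inner_eq : ⟪y - x, y + x⟫ = ‖y‖ ^ 2 - ‖x‖ ^ 2 := by
    rw [inner_sub_left, inner_add_right, inner_add_right, real_inner_self_eq_norm_sq,
      real_inner_self_eq_norm_sq, real_inner_comm x y]
    ring
  rw [inner_eq, sub_nonneg, sq_le_sq₀ (norm_nonneg x) (norm_nonneg y)]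

theorem inner_sub_inner_smul_sub_inner_smul (v a b : E) :
    ⟪a - ⟪v, a⟫ • v, b - ⟪v, b⟫ • v⟫ = ⟪a, b⟫ - (2 - ‖v‖ ^ 2) * (⟪v, a⟫ * ⟪v, b⟫) := by
  simp only [inner_sub_left, inner_sub_right, real_inner_smul_left, real_inner_smul_right,
    real_inner_self_eq_norm_sq, real_inner_comm v a]
  ring

end InnerProductSpace

section LorentzCone

variable {H : Type*} [NormedAddCommGroup H] [InnerProductSpace ℝ H] {v a b : H}

theorem inner_nonneg_of_mem_lorentzCone (hv : ‖v‖ ≤ 1) (ha : a ∈ lorentzCone v)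
    (hb : b ∈ lorentzCone v) : 0 ≤ ⟪a, b⟫ := by
  have hva : 0 ≤ ⟪v, a⟫ := (norm_nonneg _).trans ha
  have hvb : 0 ≤ ⟪v, b⟫ := (norm_nonneg _).trans hb
  have inner_ge : -(⟪v, a⟫ * ⟪v, b⟫) ≤ ⟪a - ⟪v, a⟫ • v, b - ⟪v, b⟫ • v⟫ :=
    calc -(⟪v, a⟫ * ⟪v, b⟫)
      _ ≤ -(‖a - ⟪v, a⟫ • v‖ * ‖b - ⟪v, b⟫ • v‖) :=
        neg_le_neg (mul_le_mul ha hb (norm_nonneg _) hva)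
      _ ≤ ⟪a - ⟪v, a⟫ • v, b - ⟪v, b⟫ • v⟫ := neg_le_of_abs_le (abs_real_inner_le_norm _ _)
  have norm_sq_le_one : ‖v‖ ^ 2 ≤ 1 := pow_le_one₀ (norm_nonneg v) hv
  calc 0
    _ ≤ (1 - ‖v‖ ^ 2) * (⟪v, a⟫ * ⟪v, b⟫) :=
      mul_nonneg (sub_nonneg.mpr norm_sq_le_one) (mul_nonneg hva hvb)
    _ ≤ ⟪a - ⟪v, a⟫ • v, b - ⟪v, b⟫ • v⟫ + (2 - ‖v‖ ^ 2) * (⟪v, a⟫ * ⟪v, b⟫) := by linarith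
    _ = ⟪a, b⟫ := by rw [inner_sub_inner_smul_sub_inner_smul, sub_add_cancel]

theorem stmt_18_general (hv : ‖v‖ ≤ 1) {x y : H} (hsub : y - x ∈ lorentzCone v)
    (hadd : y + x ∈ lorentzCone v) : ‖x‖ ≤ ‖y‖ :=
  (inner_sub_add_nonneg_iff x y).mp (inner_nonneg_of_mem_lorentzCone hv hsub hadd)

end LorentzCone

/-- A real Hilbert space ordered by a Lorentz cone is absolutely monotone:
if `±x ≤ y` (that is, `y - x` and `y + x` lie in the cone), then `‖x‖ ≤ ‖y‖`. -/
theorem stmt_18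
    {H : Type*} [NormedAddCommGroup H] [InnerProductSpace ℝ H] [CompleteSpace H]
    (v : H) (hv : ‖v‖ = 1) :
    ∀ x y : H, y - x ∈ lorentzCone v → y + x ∈ lorentzCone v → ‖x‖ ≤ ‖y‖ :=
  fun _ _ ↦ stmt_18_general hv.le
end
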